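/- arXiv:2502.11323 — 6 statements merged into one kernel-verified Lean document; each statement's English description precedes it below -/
import Mathlib

section
/- Assume at least one label equals +1, at least one label equals −1, and the data are linearly separable. Then for every τ > 0 the margin-rebalanced SVM problem — maximize M_τ(β,β₀) := min_{1≤i≤n} ỹ_i(⟨x_i,β⟩+β₀) over all β ∈ ℝ^d with ‖β‖₂ ≤ 1 and β₀ ∈ ℝ — has exactly one maximizer (β̂(τ), β̂₀(τ)), and its optimal value κ̂(τ) := M_τ(β̂(τ), β̂₀(τ)) is strictly positive. -/
open scoped RealInnerProductSpace

/-!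
The margin is superadditive and positively homogeneous in `(β, β₀)`. Both signs occur among the
weights, so a positive margin confines the intercept to a bounded interval; replacing `β` by its
projection onto the span of the features does not change the margin, so a maximizer exists by
compactness. If the optimal value is positive, rescaling shows that every maximizer has `‖β‖ = 1`.
The midpoint of two maximizers is again one, and strict convexity of the ball forces a common `β`.
For fixed `β`, each weighted score is injective in `β₀`, so averaging two different optimal
intercepts would strictly increase the margin.
-/

section PositivelyHomogeneous

variable {E F : Type*} [NormedAddCommGroup E] [NormedSpace ℝ E] [AddCommGroup F] [Module ℝ F]
  {f : E × F → ℝ} {p q : E × F}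

theorem norm_fst_eq_one_of_isMaxOn (hsmul : ∀ c : ℝ, 0 < c → ∀ r, f (c • r) = c * f r)
    (hp : ‖p.1‖ ≤ 1) (hmax : IsMaxOn f {r | ‖r.1‖ ≤ 1} p) (hpos : 0 < f p) : ‖p.1‖ = 1 := by
  refine hp.eq_of_not_lt fun hlt => ?_
  have hc : 1 < 2 - ‖p.1‖ := by linarith
  have hfeasible : ‖((2 - ‖p.1‖) • p).1‖ ≤ 1 := by
    rw [Prod.smul_fst, norm_smul, Real.norm_of_nonneg (by linarith)]
    linarith [sq_nonneg (1 - ‖p.1‖)]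
  have hle : f ((2 - ‖p.1‖) • p) ≤ f p := hmax hfeasible
  rw [hsmul _ (by linarith)] at hle
  exact hle.not_gt (lt_mul_of_one_lt_left hpos hc)

theorem fst_eq_of_isMaxOn [StrictConvexSpace ℝ E]
    (hsmul : ∀ c : ℝ, 0 < c → ∀ r, f (c • r) = c * f r)
    (hadd : ∀ r s, f r + f s ≤ f (r + s))
    (hp : ‖p.1‖ ≤ 1) (hpmax : IsMaxOn f {r | ‖r.1‖ ≤ 1} p)
    (hq : ‖q.1‖ ≤ 1) (hqmax : IsMaxOn f {r | ‖r.1‖ ≤ 1} q) (hpos : 0 < f p) : p.1 = q.1 := by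
  have hpq : f p = f q := (hqmax hp).antisymm (hpmax hq)
  have hpnorm : ‖p.1‖ = 1 := norm_fst_eq_one_of_isMaxOn hsmul hp hpmax hpos
  have hqnorm : ‖q.1‖ = 1 := norm_fst_eq_one_of_isMaxOn hsmul hq hqmax (hpq ▸ hpos)
  by_contra hne
  have hmid_lt : ‖((1 / 2 : ℝ) • (p + q)).1‖ < 1 :=
    ((norm_midpoint_lt_iff (hpnorm.trans hqnorm.symm)).2 hne).trans_eq hpnorm
  have hmid_ge : f p ≤ f ((1 / 2 : ℝ) • (p + q)) := by
    rw [hsmul _ one_half_pos]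
    linarith [hadd p q]
  have hmid_max : IsMaxOn f {r | ‖r.1‖ ≤ 1} ((1 / 2 : ℝ) • (p + q)) :=
    fun r hr => (hpmax hr).trans hmid_ge
  exact hmid_lt.ne
    (norm_fst_eq_one_of_isMaxOn hsmul hmid_lt.le hmid_max (hpos.trans_le hmid_ge))

end PositivelyHomogeneous

section WeightedMargin

variable {ι E : Type*} [Fintype ι] [Nonempty ι] [NormedAddCommGroup E] [InnerProductSpace ℝ E]

/-- The margin `min_i w i * (⟪x i, β⟫ + β₀)` of the affine classifier `p = (β, β₀)` on the feature
vectors `x`. The weights `w` play the role of the rebalanced labels `ỹ`: their signs are the labels,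
and their absolute values are arbitrary. -/
noncomputable def weightedMargin (w : ι → ℝ) (x : ι → E) (p : E × ℝ) : ℝ :=
  Finset.univ.inf' Finset.univ_nonempty fun i => w i * (⟪x i, p.1⟫ + p.2)

variable {w : ι → ℝ} {x : ι → E} {p q : E × ℝ} {t : ℝ}

theorem le_weightedMargin_iff :
    t ≤ weightedMargin w x p ↔ ∀ i, t ≤ w i * (⟪x i, p.1⟫ + p.2) := by
  simp [weightedMargin]

theorem lt_weightedMargin_iff :
    t < weightedMargin w x p ↔ ∀ i, t < w i * (⟪x i, p.1⟫ + p.2) := by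
  simp [weightedMargin]

theorem weightedMargin_le (i : ι) : weightedMargin w x p ≤ w i * (⟪x i, p.1⟫ + p.2) :=
  le_weightedMargin_iff.1 le_rfl i

theorem continuous_weightedMargin : Continuous (weightedMargin w x) :=
  Continuous.finset_inf'_apply _ fun i _ => by fun_prop

theorem weightedMargin_zero : weightedMargin w x 0 = 0 := by
  simp [weightedMargin]

theorem weightedMargin_smul {c : ℝ} (hc : 0 < c) (p : E × ℝ) :
    weightedMargin w x (c • p) = c * weightedMargin w x p := by
  refine eq_of_forall_le_iff fun t => ?_
  simp only [← div_le_iff₀' hc, le_weightedMargin_iff, Prod.smul_fst, Prod.smul_snd,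
    inner_smul_right, smul_eq_mul, ← mul_add, mul_left_comm _ c]

theorem weightedMargin_add_le (p q : E × ℝ) :
    weightedMargin w x p + weightedMargin w x q ≤ weightedMargin w x (p + q) := by
  refine le_weightedMargin_iff.2 fun i => ?_
  calc weightedMargin w x p + weightedMargin w x q
      ≤ w i * (⟪x i, p.1⟫ + p.2) + w i * (⟪x i, q.1⟫ + q.2) :=
        add_le_add (weightedMargin_le i) (weightedMargin_le i)
    _ = w i * (⟪x i, (p + q).1⟫ + (p + q).2) := by
        rw [Prod.fst_add, Prod.snd_add, inner_add_right]
        ring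

theorem exists_norm_fst_le_one_weightedMargin_pos (h : 0 < weightedMargin w x p) :
    ∃ q : E × ℝ, ‖q.1‖ ≤ 1 ∧ 0 < weightedMargin w x q := by
  have hc : 0 < 1 + ‖p.1‖ := by positivity
  refine ⟨(1 + ‖p.1‖)⁻¹ • p, ?_, ?_⟩
  · rw [Prod.smul_fst, norm_smul, Real.norm_of_nonneg (by positivity), inv_mul_le_iff₀ hc]
    linarith
  · rw [weightedMargin_smul (by positivity)]
    positivity

theorem snd_mem_Icc_of_weightedMargin_pos {i j : ι} (hi : 0 < w i) (hj : w j < 0)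
    (hp : ‖p.1‖ ≤ 1) (hpos : 0 < weightedMargin w x p) : p.2 ∈ Set.Icc (-‖x i‖) ‖x j‖ := by
  have hscore_i : 0 < ⟪x i, p.1⟫ + p.2 :=
    pos_of_mul_pos_right (lt_weightedMargin_iff.1 hpos i) hi.le
  have hscore_j : ⟪x j, p.1⟫ + p.2 < 0 :=
    neg_of_mul_pos_right (lt_weightedMargin_iff.1 hpos j) hj.le
  have hinner (k : ι) : |⟪x k, p.1⟫| ≤ ‖x k‖ :=
    (abs_real_inner_le_norm _ _).trans (mul_le_of_le_one_right (norm_nonneg _) hp)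
  constructor
  · linarith [(abs_le.1 (hinner i)).2]
  · linarith [(abs_le.1 (hinner j)).1]

theorem exists_isMaxOn_weightedMargin (hpos : ∃ i, 0 < w i) (hneg : ∃ i, w i < 0) :
    ∃ p : E × ℝ, ‖p.1‖ ≤ 1 ∧ IsMaxOn (weightedMargin w x) {q | ‖q.1‖ ≤ 1} p := by
  obtain ⟨i, hi⟩ := hpos
  obtain ⟨j, hj⟩ := hneg
  let S : Submodule ℝ E := Submodule.span ℝ (Set.range x)
  have : FiniteDimensional ℝ S := FiniteDimensional.span_of_finite ℝ (Set.finite_range x)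
  let proj (q : E × ℝ) : S × ℝ := (S.orthogonalProjectionOnto q.1, q.2)
  have hmargin_proj (q : E × ℝ) :
      weightedMargin w x ((proj q).1, (proj q).2) = weightedMargin w x q := by
    have hinner (k : ι) : ⟪x k, ((proj q).1 : E)⟫ = ⟪x k, q.1⟫ :=
      S.inner_orthogonalProjectionOnto_eq_of_mem_left
        ⟨x k, Submodule.subset_span (Set.mem_range_self k)⟩ q.1
    simp only [weightedMargin, hinner, proj]
  let K : Set (S × ℝ) := Metric.closedBall 0 1 ×ˢ Set.Icc (-‖x i‖) ‖x j‖
  have hK_zero : (0 : S × ℝ) ∈ K := by simp [K]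
  have hK_compact : IsCompact K := (isCompact_closedBall 0 1).prod isCompact_Icc
  have hcont : Continuous fun s : S × ℝ => weightedMargin w x (s.1, s.2) :=
    continuous_weightedMargin.comp (by fun_prop)
  obtain ⟨p, hpK, hpmax⟩ := hK_compact.exists_isMaxOn ⟨0, hK_zero⟩ hcont.continuousOn
  refine ⟨(p.1, p.2), mem_closedBall_zero_iff.1 hpK.1, fun q hq => ?_⟩
  rcases le_or_gt (weightedMargin w x q) 0 with hq_nonpos | hq_pos
  · exact hq_nonpos.trans (weightedMargin_zero.symm.trans_le (hpmax hK_zero))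
  · have hproj_mem : proj q ∈ K :=
      ⟨mem_closedBall_zero_iff.2 ((S.norm_orthogonalProjectionOnto_apply_le q.1).trans hq),
        snd_mem_Icc_of_weightedMargin_pos hi hj hq hq_pos⟩
    exact (hmargin_proj q).symm.trans_le (hpmax hproj_mem)

theorem min_weightedMargin_lt_midpoint (hw : ∀ i, w i ≠ 0) (β : E) {b c : ℝ} (hbc : b ≠ c) :
    min (weightedMargin w x (β, b)) (weightedMargin w x (β, c)) <
      weightedMargin w x (β, midpoint ℝ b c) := by
  refine lt_weightedMargin_iff.2 fun i => ?_
  have hscore_ne : w i * (⟪x i, β⟫ + b) ≠ w i * (⟪x i, β⟫ + c) := by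
    simpa [hw i] using hbc
  calc min (weightedMargin w x (β, b)) (weightedMargin w x (β, c))
      ≤ min (w i * (⟪x i, β⟫ + b)) (w i * (⟪x i, β⟫ + c)) :=
        min_le_min (weightedMargin_le i) (weightedMargin_le i)
    _ < midpoint ℝ (w i * (⟪x i, β⟫ + b)) (w i * (⟪x i, β⟫ + c)) := by
        rw [midpoint_eq_smul_add, smul_eq_mul, invOf_eq_inv]
        linarith [min_lt_max.2 hscore_ne, min_add_max (w i * (⟪x i, β⟫ + b)) (w i * (⟪x i, β⟫ + c))]
    _ = w i * (⟪x i, β⟫ + midpoint ℝ b c) := by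
        simp only [midpoint_eq_smul_add, smul_eq_mul, invOf_eq_inv]
        ring

theorem eq_of_isMaxOn_weightedMargin
    (hp : ‖p.1‖ ≤ 1) (hpmax : IsMaxOn (weightedMargin w x) {r | ‖r.1‖ ≤ 1} p)
    (hq : ‖q.1‖ ≤ 1) (hqmax : IsMaxOn (weightedMargin w x) {r | ‖r.1‖ ≤ 1} q)
    (hpos : 0 < weightedMargin w x p) : p = q := by
  have hfst : p.1 = q.1 := fst_eq_of_isMaxOn (fun _ hc => weightedMargin_smul hc)
    weightedMargin_add_le hp hpmax hq hqmax hpos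
  refine Prod.ext hfst (by_contra fun hsnd => ?_)
  have hw (i : ι) : w i ≠ 0 := left_ne_zero_of_mul (lt_weightedMargin_iff.1 hpos i).ne'
  have hlt := min_weightedMargin_lt_midpoint (x := x) hw p.1 hsnd
  have hpq : weightedMargin w x p ≤ weightedMargin w x (p.1, q.2) := hfst ▸ hqmax hp
  rw [min_eq_left hpq] at hlt
  exact hlt.not_ge (hpmax hp)

theorem stmt_0_general (hpos : ∃ i, 0 < w i) (hneg : ∃ i, w i < 0)
    (hsep : ∃ (β : E) (β₀ : ℝ), ∀ i, 0 < w i * (⟪x i, β⟫ + β₀)) :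
    (∃! p : E × ℝ, ‖p.1‖ ≤ 1 ∧ IsMaxOn (weightedMargin w x) {q | ‖q.1‖ ≤ 1} p) ∧
    ∀ p : E × ℝ, IsMaxOn (weightedMargin w x) {q | ‖q.1‖ ≤ 1} p → 0 < weightedMargin w x p := by
  obtain ⟨β, β₀, hβ⟩ := hsep
  obtain ⟨q, hq, hq_pos⟩ :=
    exists_norm_fst_le_one_weightedMargin_pos (p := (β, β₀)) (lt_weightedMargin_iff.2 hβ)
  have hopt_pos (p : E × ℝ) (hp : IsMaxOn (weightedMargin w x) {q | ‖q.1‖ ≤ 1} p) :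
      0 < weightedMargin w x p := hq_pos.trans_le (hp hq)
  obtain ⟨p, hp, hpmax⟩ := exists_isMaxOn_weightedMargin (x := x) hpos hneg
  exact ⟨⟨p, ⟨hp, hpmax⟩, fun r hr =>
    eq_of_isMaxOn_weightedMargin hr.1 hr.2 hp hpmax (hopt_pos r hr.2)⟩, hopt_pos⟩

end WeightedMargin

/-- For linearly separable data with both labels present, for every
`τ > 0` the margin-rebalanced SVM problem has exactly one maximizer over
`{β : ‖β‖ ≤ 1} × ℝ`, and the optimal value is strictly positive. -/
theorem stmt_0
    (n d : ℕ) (hn : 1 ≤ n) (hd : 1 ≤ d)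
    (x : Fin n → EuclideanSpace ℝ (Fin d))
    (y : Fin n → ℝ) (hy : ∀ i, y i = 1 ∨ y i = -1)
    (hplus : ∃ i, y i = 1) (hminus : ∃ i, y i = -1)
    (hsep : ∃ (β : EuclideanSpace ℝ (Fin d)) (β₀ : ℝ),
      ∀ i, 0 < y i * (⟪x i, β⟫ + β₀))
    (τ : ℝ) (hτ : 0 < τ)
    (ytil : Fin n → ℝ)
    (hytil1 : ∀ i, y i = 1 → ytil i = 1 / τ)
    (hytil2 : ∀ i, y i = -1 → ytil i = -1)
    (M : EuclideanSpace ℝ (Fin d) → ℝ → ℝ)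
    (hM : ∀ β β₀, M β β₀ =
      (Finset.univ : Finset (Fin n)).inf' ⟨hplus.choose, Finset.mem_univ hplus.choose⟩
        fun i => ytil i * (⟪x i, β⟫ + β₀)) :
    (∃! p : EuclideanSpace ℝ (Fin d) × ℝ,
      ‖p.1‖ ≤ 1 ∧
        ∀ q : EuclideanSpace ℝ (Fin d) × ℝ, ‖q.1‖ ≤ 1 → M q.1 q.2 ≤ M p.1 p.2) ∧
    ∀ p : EuclideanSpace ℝ (Fin d) × ℝ,
      ‖p.1‖ ≤ 1 →
      (∀ q : EuclideanSpace ℝ (Fin d) × ℝ, ‖q.1‖ ≤ 1 → M q.1 q.2 ≤ M p.1 p.2) →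
      0 < M p.1 p.2 := by
  have hsep_ytil : ∃ (β : EuclideanSpace ℝ (Fin d)) (β₀ : ℝ),
      ∀ i, 0 < ytil i * (⟪x i, β⟫ + β₀) := by
    obtain ⟨β, β₀, hβ⟩ := hsep
    refine ⟨β, β₀, fun i => ?_⟩
    rcases hy i with hi | hi
    · rw [hytil1 i hi]
      exact mul_pos (one_div_pos.2 hτ) (by simpa [hi] using hβ i)
    · rw [hytil2 i hi, ← hi]
      exact hβ i
  have : Nonempty (Fin n) := hplus.nonempty
  obtain rfl : M = fun β β₀ => weightedMargin ytil x (β, β₀) := funext₂ hM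
  obtain ⟨hunique, hopt_pos⟩ := stmt_0_general
    (hplus.imp fun i hi => hytil1 i hi ▸ one_div_pos.2 hτ)
    (hminus.imp fun i hi => hytil2 i hi ▸ neg_one_lt_zero) hsep_ytil
  exact ⟨hunique, fun p _ hp => hopt_pos p hp⟩
end

section
/- Assume at least one label equals +1, at least one label equals −1, and the data are linearly separable. Fix τ > 0 and let (β̂, β̂₀) be the unique maximizer of M_τ(β,β₀) := min_{1≤i≤n} ỹ_i(⟨x_i,β⟩+β₀) over {β : ‖β‖₂ ≤ 1} × ℝ, with optimal value κ̂. Writing m₊ := min{⟨x_i, β̂⟩ : y_i = +1} and m₋ := max{⟨x_i, β̂⟩ : y_i = −1}, one has (τ+1)·κ̂ = m₊ − m₋ and (τ+1)·β̂₀ = −(τ·m₋ + m₊). -/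
open scoped RealInnerProductSpace

/-!
Fix the direction. As a function of the offset `b`, the margin is `min ((m₊ + b) / τ) (-(m₋ + b))`.
Weighting the two terms by `τ` and `1` gives the sum `m₊ - m₋`, which does not depend on `b`; hence
`(τ + 1)` times the minimum is at most `m₊ - m₋`, with equality exactly when the two terms agree.
Some offset makes them agree, so every optimal one does.
-/

lemma mul_add_le_add_one_mul_min_iff {R : Type*} [Semiring R] [LinearOrder R]
    [IsStrictOrderedRing R] {r u v : R} (hr : 0 < r) :
    r * u + v ≤ (r + 1) * min u v ↔ u = v := by
  rcases le_total u v with huv | hvu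
  · rw [min_eq_left huv, add_one_mul, add_le_add_iff_left]
    exact ⟨huv.antisymm, ge_of_eq⟩
  · rw [min_eq_right hvu, add_one_mul, add_le_add_iff_right, mul_le_mul_iff_right₀ hr]
    exact ⟨fun h => h.antisymm hvu, le_of_eq⟩

section Margin

variable {ι 𝕜 : Type*} [Field 𝕜] [LinearOrder 𝕜] [IsStrictOrderedRing 𝕜] {τ p m b : 𝕜}

lemma add_div_eq_neg_add_of_forall_min_le (hτ : 0 < τ)
    (hopt : ∀ b', min ((p + b') / τ) (-(m + b')) ≤ min ((p + b) / τ) (-(m + b))) :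
    (p + b) / τ = -(m + b) := by
  have hτ1 : 0 < τ + 1 := by linarith
  set b' := -(τ * m + p) / (τ + 1) with hb'
  have hpos : (p + b') / τ = (p - m) / (τ + 1) := by rw [hb']; field_simp; ring
  have hneg : -(m + b') = (p - m) / (τ + 1) := by rw [hb']; field_simp; ring
  have hmin : (p - m) / (τ + 1) ≤ min ((p + b) / τ) (-(m + b)) := by
    simpa only [hpos, hneg, min_self] using hopt b'
  refine (mul_add_le_add_one_mul_min_iff hτ).1 ?_
  calc τ * ((p + b) / τ) + -(m + b) = p - m := by field_simp; ring
    _ ≤ (τ + 1) * min ((p + b) / τ) (-(m + b)) := (div_le_iff₀' hτ1).1 hmin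

-- `P` and `N` are the two classes, `w i` is the rebalanced label and `s i` the score `⟪x i, β⟫`.
variable {P N : Set ι} {w s : ι → 𝕜}

lemma isGLB_range_mul_add (hτ : 0 < τ) (hPN : ∀ i, i ∈ P ∨ i ∈ N)
    (hwP : ∀ i ∈ P, w i = 1 / τ) (hwN : ∀ i ∈ N, w i = -1)
    (hp : IsGLB (s '' P) p) (hm : IsLUB (s '' N) m) (b : 𝕜) :
    IsGLB (Set.range fun i => w i * (s i + b)) (min ((p + b) / τ) (-(m + b))) := by
  refine isGLB_iff_le_iff.2 fun c => ?_
  have hpos (v : 𝕜) : c ≤ (v + b) / τ ↔ c * τ - b ≤ v := by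
    rw [le_div_iff₀ hτ, sub_le_iff_le_add]
  have hneg (v : 𝕜) : c ≤ -(v + b) ↔ v ≤ -c - b := by
    rw [le_neg, le_sub_iff_add_le]
  have hP {i} (hi : i ∈ P) : c ≤ w i * (s i + b) ↔ c * τ - b ≤ s i := by
    rw [hwP i hi, one_div_mul_eq_div, hpos]
  have hN {i} (hi : i ∈ N) : c ≤ w i * (s i + b) ↔ s i ≤ -c - b := by
    rw [hwN i hi, neg_one_mul, hneg]
  calc c ≤ min ((p + b) / τ) (-(m + b))
      ↔ (∀ i ∈ P, c * τ - b ≤ s i) ∧ ∀ i ∈ N, s i ≤ -c - b := by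
        rw [le_min_iff, hpos, hneg, le_isGLB_iff hp, isLUB_le_iff hm, mem_lowerBounds,
          mem_upperBounds, Set.forall_mem_image, Set.forall_mem_image]
    _ ↔ ∀ i, c ≤ w i * (s i + b) :=
        ⟨fun h i => (hPN i).elim (fun hi => (hP hi).2 (h.1 i hi)) fun hi => (hN hi).2 (h.2 i hi),
          fun h => ⟨fun i hi => (hP hi).1 (h i), fun i hi => (hN hi).1 (h i)⟩⟩
    _ ↔ c ∈ lowerBounds (Set.range fun i => w i * (s i + b)) := Set.forall_mem_range.symm

theorem stmt_2_general (hτ : 0 < τ) (hPN : ∀ i, i ∈ P ∨ i ∈ N)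
    (hwP : ∀ i ∈ P, w i = 1 / τ) (hwN : ∀ i ∈ N, w i = -1)
    {M : 𝕜 → 𝕜} (hM : ∀ b, IsGLB (Set.range fun i => w i * (s i + b)) (M b))
    (hopt : ∀ b', M b' ≤ M b) (hp : IsGLB (s '' P) p) (hm : IsLUB (s '' N) m) :
    (τ + 1) * M b = p - m ∧ (τ + 1) * b = -(τ * m + p) := by
  have hmargin (b' : 𝕜) : M b' = min ((p + b') / τ) (-(m + b')) :=
    (hM b').unique (isGLB_range_mul_add hτ hPN hwP hwN hp hm b')
  have hbalance : (p + b) / τ = -(m + b) :=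
    add_div_eq_neg_add_of_forall_min_le hτ (by simpa only [hmargin] using hopt)
  have hvalue : M b = -(m + b) := by rw [hmargin, hbalance, min_self]
  have hoffset : p + b = -(m + b) * τ := (div_eq_iff hτ.ne').1 hbalance
  exact ⟨by rw [hvalue]; linear_combination -hoffset, by linear_combination hoffset⟩

end Margin

/-- Support-vector characterization of the margin-rebalanced SVM:
`(τ+1)·κ̂ = m₊ − m₋` and `(τ+1)·β̂₀ = −(τ·m₋ + m₊)`. -/
theorem stmt_2
    (n d : ℕ) (hn : 1 ≤ n) (hd : 1 ≤ d)
    (x : Fin n → EuclideanSpace ℝ (Fin d))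
    (y : Fin n → ℝ) (hy : ∀ i, y i = 1 ∨ y i = -1)
    (hplus : ∃ i, y i = 1) (hminus : ∃ i, y i = -1)
    (hsep : ∃ (β : EuclideanSpace ℝ (Fin d)) (β₀ : ℝ),
      ∀ i, 0 < y i * (⟪x i, β⟫ + β₀))
    (τ : ℝ) (hτ : 0 < τ)
    (ytil : Fin n → ℝ)
    (hytil1 : ∀ i, y i = 1 → ytil i = 1 / τ)
    (hytil2 : ∀ i, y i = -1 → ytil i = -1)
    (M : EuclideanSpace ℝ (Fin d) → ℝ → ℝ)
    (hM : ∀ β β₀, M β β₀ =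
      (Finset.univ : Finset (Fin n)).inf' ⟨hplus.choose, Finset.mem_univ hplus.choose⟩
        fun i => ytil i * (⟪x i, β⟫ + β₀))
    (βhat : EuclideanSpace ℝ (Fin d)) (βhat₀ : ℝ)
    (hnorm : ‖βhat‖ ≤ 1)
    (hopt : ∀ q : EuclideanSpace ℝ (Fin d) × ℝ, ‖q.1‖ ≤ 1 → M q.1 q.2 ≤ M βhat βhat₀)
    (κhat : ℝ) (hκ : κhat = M βhat βhat₀)
    (mplus mminus : ℝ)
    (hmplus : mplus = sInf {v : ℝ | ∃ i, y i = 1 ∧ v = ⟪x i, βhat⟫})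
    (hmminus : mminus = sSup {v : ℝ | ∃ i, y i = -1 ∧ v = ⟪x i, βhat⟫}) :
    (τ + 1) * κhat = mplus - mminus ∧
    (τ + 1) * βhat₀ = -(τ * mminus + mplus) := by
  have hscores (c : ℝ) : {v : ℝ | ∃ i, y i = c ∧ v = ⟪x i, βhat⟫} =
      (fun i => ⟪x i, βhat⟫) '' {i | y i = c} := by
    ext v
    exact exists_congr fun i => and_congr_right fun _ => eq_comm
  have hmargin (b : ℝ) : IsGLB (Set.range fun i => ytil i * (⟪x i, βhat⟫ + b)) (M βhat b) := by
    have : Nonempty (Fin n) := ⟨hplus.choose⟩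
    rw [hM, Finset.inf'_univ_eq_ciInf]
    exact isGLB_ciInf (Set.finite_range _).bddBelow
  rw [hscores] at hmplus hmminus
  subst hκ hmplus hmminus
  exact stmt_2_general hτ hy hytil1 hytil2 hmargin (fun b => hopt (βhat, b) hnorm)
    (isGLB_csInf (.image _ hplus) ((Set.toFinite _).image _).bddBelow)
    (isLUB_csSup (.image _ hminus) ((Set.toFinite _).image _).bddAbove)
end

section
/- Assume at least one label equals +1, at least one label equals −1, and the data are linearly separable; let (β̂, β̂₀) be the unique maximizer of M₁(β,β₀) := min_{1≤i≤n} y_i(⟨x_i,β⟩+β₀) over {β : ‖β‖₂ ≤ 1} × ℝ (the max-margin classifier). Let ℓ : ℝ → ℝ be convex, non-increasing, non-constant, strictly positive, and rapidly varying in the sense that for every ε ∈ (0,1), ℓ(εt)/ℓ(t) → ∞ as t → +∞. For λ > 0, the ridge-regularized risk R_λ(β,β₀) := (1/n)·Σ_{i=1}^n ℓ(y_i(⟨x_i,β⟩+β₀)) + λ‖β‖₂² attains a global minimum; choose any minimizer (β̂_λ, β̂₀,λ). Then β̂_λ ≠ 0 for all sufficiently small λ > 0, and as λ → 0⁺ one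 has β̂_λ/‖β̂_λ‖₂ → β̂ and β̂₀,λ/‖β̂_λ‖₂ → β̂₀. -/
open Filter
open scoped RealInnerProductSpace

/-!
By homogeneity of the margin, every classifier `p = (β, β₀)` satisfies `margin p ≤ ‖β‖ * K`, where
`K > 0` is the maximal margin over the unit ball, attained at `ŵ = (β̂, β̂₀)`. Two ideas give the
convergence.

* The max-margin problem is well posed. If `p` lies in the unit ball and has margin close to `K`,
  superadditivity gives `margin p + K ≤ ‖β + β̂‖ * K`, so `‖β + β̂‖` is close to `2`, and the
  parallelogram law forces `β` close to `β̂`. The intercept is then squeezed between the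
  constraints of a positive and of a negative data point whose margin is exactly `K` at `ŵ`.
* Comparing a ridge minimizer `w = (β, β₀)` with `‖β‖ • ŵ` cancels the penalties and leaves
  `ℓ (margin w) ≤ n * ℓ (‖β‖ * K)`. Since `‖β‖ → ∞`, rapid variation absorbs the factor `n` at the
  cost of an arbitrarily small relative error in the argument, so `margin w / ‖β‖ → K`.
-/

section Loss

open Set Topology

variable {ℓ : ℝ → ℝ}

/-- Rapid variation (of index `-∞`) at infinity, the condition on the loss under which the risk is
dominated by the data points of smallest margin. -/
def RapidlyVarying (ℓ : ℝ → ℝ) : Prop :=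
  ∀ ε : ℝ, ε ∈ Ioo (0 : ℝ) 1 → Tendsto (fun t => ℓ (ε * t) / ℓ t) atTop atTop

theorem RapidlyVarying.tendsto_zero (hrapid : RapidlyVarying ℓ) (hanti : Antitone ℓ)
    (hpos : ∀ t, 0 < ℓ t) : Tendsto ℓ atTop (𝓝 0) := by
  have hratio : Tendsto (fun t => ℓ 0 / ℓ t) atTop atTop := by
    refine tendsto_atTop_mono' atTop ?_ (hrapid (1 / 2) ⟨by norm_num, by norm_num⟩)
    filter_upwards [eventually_ge_atTop 0] with t ht
    gcongr
    · exact (hpos t).le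
    · exact hanti (by positivity)
  simpa [mul_div_cancel₀, (hpos 0).ne'] using hratio.inv_tendsto_atTop.const_mul (ℓ 0)

theorem RapidlyVarying.eventually_mul_lt_of_le (hrapid : RapidlyVarying ℓ) (hanti : Antitone ℓ)
    (hpos : ∀ t, 0 < ℓ t) (C : ℝ) {ε : ℝ} (hε : ε ∈ Ioo (0 : ℝ) 1) :
    ∀ᶠ t in atTop, ∀ m, ℓ m ≤ C * ℓ t → ε * t < m := by
  filter_upwards [(hrapid ε hε).eventually_gt_atTop C] with t ht m hm
  have hlt : ℓ m < ℓ (ε * t) := hm.trans_lt ((lt_div_iff₀ (hpos t)).1 ht)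
  exact hanti.reflect_lt hlt

theorem tendsto_atBot_atTop_of_convexOn_of_antitone (hconv : ConvexOn ℝ univ ℓ)
    (hanti : Antitone ℓ) (hnonconst : ∃ s t, ℓ s ≠ ℓ t) : Tendsto ℓ atBot atTop := by
  obtain ⟨s, t, hst, hlt⟩ : ∃ s t, s < t ∧ ℓ t < ℓ s := by
    obtain ⟨s, t, hne⟩ := hnonconst
    rcases hne.lt_or_gt with h | h
    · exact ⟨t, s, hanti.reflect_lt h, h⟩
    · exact ⟨s, t, hanti.reflect_lt h, h⟩
  have hslope : (ℓ t - ℓ s) / (t - s) < 0 := div_neg_of_neg_of_pos (by linarith) (by linarith)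
  have hline : Tendsto (fun u => ℓ s + (ℓ t - ℓ s) / (t - s) * (u - s)) atBot atTop :=
    tendsto_atTop_add_const_left _ _
      ((tendsto_atBot_add_const_right _ (-s) tendsto_id).const_mul_atBot_of_neg hslope)
  refine tendsto_atTop_mono' _ ?_ hline
  filter_upwards [eventually_lt_atBot s] with u hu
  have hadj := hconv.slope_mono_adjacent (mem_univ u) (mem_univ t) hu hst
  rw [div_le_iff₀ (sub_pos.2 hu)] at hadj
  linarith

end Loss

section Margin

open Set Topology

variable {ι E : Type*} [NormedAddCommGroup E] [InnerProductSpace ℝ E]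
  {x : ι → E} {y : ι → ℝ}

/-- The functional margin `y i * (⟪x i, β⟫ + β₀)` of the affine classifier `p = (β, β₀)` at the
`i`-th data point.  The labels may be arbitrary reals. -/
def functionalMargin (x : ι → E) (y : ι → ℝ) (p : E × ℝ) (i : ι) : ℝ :=
  y i * (⟪x i, p.1⟫ + p.2)

theorem functionalMargin_add (p q : E × ℝ) (i : ι) :
    functionalMargin x y (p + q) i = functionalMargin x y p i + functionalMargin x y q i := by
  simp only [functionalMargin, Prod.fst_add, Prod.snd_add, inner_add_right]
  ring

theorem functionalMargin_smul (t : ℝ) (p : E × ℝ) (i : ι) :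
    functionalMargin x y (t • p) i = t * functionalMargin x y p i := by
  simp only [functionalMargin, Prod.smul_fst, Prod.smul_snd, inner_smul_right, smul_eq_mul]
  ring

theorem continuous_functionalMargin (i : ι) :
    Continuous fun p : E × ℝ => functionalMargin x y p i := by
  unfold functionalMargin
  fun_prop

theorem snd_eq_functionalMargin_div_sub_inner {i : ι} (hi : y i ≠ 0) (p : E × ℝ) :
    p.2 = functionalMargin x y p i / y i - ⟪x i, p.1⟫ := by
  rw [functionalMargin, mul_div_cancel_left₀ _ hi]
  ring

theorem isBounded_setOf_le_functionalMargin (hplus : ∃ i, 0 < y i) (hminus : ∃ i, y i < 0)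
    (r B : ℝ) :
    Bornology.IsBounded {p : E × ℝ | ‖p.1‖ ≤ r ∧ ∀ i, B ≤ functionalMargin x y p i} := by
  obtain ⟨i, hi⟩ := hplus
  obtain ⟨j, hj⟩ := hminus
  refine ((Metric.isBounded_closedBall (x := (0 : E)) (r := r)).prod
    (Metric.isBounded_Icc (B / y i - ‖x i‖ * r) (B / y j + ‖x j‖ * r))).subset ?_
  rintro p ⟨hp, hB⟩
  have hinner (k : ι) : |⟪x k, p.1⟫| ≤ ‖x k‖ * r :=
    (abs_real_inner_le_norm _ _).trans (mul_le_mul_of_nonneg_left hp (norm_nonneg _))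
  have hlower : B / y i - ⟪x i, p.1⟫ ≤ p.2 := by
    rw [snd_eq_functionalMargin_div_sub_inner (x := x) hi.ne' p]
    gcongr
    exact hB i
  have hupper : p.2 ≤ B / y j - ⟪x j, p.1⟫ := by
    rw [snd_eq_functionalMargin_div_sub_inner (x := x) hj.ne p]
    exact sub_le_sub_right (div_le_div_of_nonpos_of_le hj.le (hB j)) _
  refine ⟨by simpa using hp, ?_, ?_⟩
  · linarith [(abs_le.1 (hinner i)).2]
  · linarith [(abs_le.1 (hinner j)).1]

variable [Fintype ι] [Nonempty ι]

/-- The margin of the affine classifier `p = (β, β₀)`: its smallest functional margin. It is not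
normalized by `‖β‖`, hence positively homogeneous in `p`. -/
def margin (x : ι → E) (y : ι → ℝ) (p : E × ℝ) : ℝ :=
  Finset.univ.inf' Finset.univ_nonempty (functionalMargin x y p)

theorem margin_le_functionalMargin (p : E × ℝ) (i : ι) : margin x y p ≤ functionalMargin x y p i :=
  Finset.inf'_le _ (Finset.mem_univ i)

theorem le_margin_iff {c : ℝ} {p : E × ℝ} :
    c ≤ margin x y p ↔ ∀ i, c ≤ functionalMargin x y p i := by
  simp [margin]

theorem lt_margin_iff {c : ℝ} {p : E × ℝ} :
    c < margin x y p ↔ ∀ i, c < functionalMargin x y p i := by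
  simp [margin]

theorem exists_margin_eq_functionalMargin (x : ι → E) (y : ι → ℝ) (p : E × ℝ) :
    ∃ i, margin x y p = functionalMargin x y p i := by
  simpa [margin] using Finset.exists_mem_eq_inf' Finset.univ_nonempty (functionalMargin x y p)

theorem margin_add_le_margin_add (p q : E × ℝ) :
    margin x y p + margin x y q ≤ margin x y (p + q) := by
  refine le_margin_iff.2 fun i => ?_
  rw [functionalMargin_add]
  exact add_le_add (margin_le_functionalMargin p i) (margin_le_functionalMargin q i)

theorem margin_smul {t : ℝ} (ht : 0 ≤ t) (p : E × ℝ) :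
    margin x y (t • p) = t * margin x y p := by
  obtain ⟨i, hi⟩ := exists_margin_eq_functionalMargin x y p
  apply le_antisymm
  · rw [hi, ← functionalMargin_smul]
    exact margin_le_functionalMargin _ i
  · refine le_margin_iff.2 fun j => ?_
    rw [functionalMargin_smul]
    exact mul_le_mul_of_nonneg_left (margin_le_functionalMargin p j) ht

section MaxMargin

variable {ŵ : E × ℝ} (hmax : IsMaxOn (margin x y) {p | ‖p.1‖ ≤ 1} ŵ)

include hmax

theorem mul_margin_le_of_isMaxOn {p : E × ℝ} {t : ℝ} (ht : 0 ≤ t) (hp : t * ‖p.1‖ ≤ 1) :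
    t * margin x y p ≤ margin x y ŵ := by
  rw [← margin_smul ht]
  refine hmax (show ‖t • p.1‖ ≤ 1 from ?_)
  rwa [norm_smul, Real.norm_of_nonneg ht]

theorem fst_ne_zero_of_margin_pos {p : E × ℝ} (hp : 0 < margin x y p) : p.1 ≠ 0 := by
  intro hzero
  obtain ⟨t, ht_nonneg, ht⟩ := ((eventually_ge_atTop 0).and
    ((tendsto_id.atTop_mul_const hp).eventually_gt_atTop (margin x y ŵ))).exists
  exact ht.not_ge (mul_margin_le_of_isMaxOn hmax ht_nonneg (by simp [hzero]))

theorem margin_le_norm_mul_margin (p : E × ℝ) : margin x y p ≤ ‖p.1‖ * margin x y ŵ := by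
  rcases eq_or_ne p.1 0 with hzero | hne
  · have : ¬ 0 < margin x y p := fun hp => fst_ne_zero_of_margin_pos hmax hp hzero
    simpa [hzero] using this
  · have hnorm : 0 < ‖p.1‖ := norm_pos_iff.2 hne
    rw [← inv_mul_le_iff₀ hnorm]
    exact mul_margin_le_of_isMaxOn hmax (by positivity) (inv_mul_cancel₀ hnorm.ne').le

theorem margin_pos_of_isMaxOn (hsep : ∃ p, 0 < margin x y p) : 0 < margin x y ŵ := by
  obtain ⟨p, hp⟩ := hsep
  exact pos_of_mul_pos_right (hp.trans_le (margin_le_norm_mul_margin hmax p)) (norm_nonneg _)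

theorem norm_fst_sub_sq_le_of_isMaxOn (hŵ : ‖ŵ.1‖ ≤ 1) (hK : 0 < margin x y ŵ) {p : E × ℝ}
    (hp : ‖p.1‖ ≤ 1) (hp_pos : 0 < margin x y p) :
    ‖p.1 - ŵ.1‖ ^ 2 ≤ 4 - (margin x y p / margin x y ŵ + 1) ^ 2 := by
  have hsum : margin x y p / margin x y ŵ + 1 ≤ ‖p.1 + ŵ.1‖ := by
    rw [← div_self hK.ne', ← add_div, div_le_iff₀ hK]
    exact (margin_add_le_margin_add p ŵ).trans (margin_le_norm_mul_margin hmax (p + ŵ))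
  have hparallelogram := parallelogram_law_with_norm ℝ p.1 ŵ.1
  have hsum_sq := pow_le_pow_left₀ (by positivity) hsum 2
  have hp_sq := pow_le_one₀ (n := 2) (norm_nonneg _) hp
  have hŵ_sq := pow_le_one₀ (n := 2) (norm_nonneg _) hŵ
  linarith

/- Otherwise a small shift of the intercept by `-s` would increase the margin: it increases the
functional margins at the points with `s * y i < 0`, and the others are not tight. -/
theorem exists_functionalMargin_eq_margin_of_isMaxOn (hŵ : ‖ŵ.1‖ ≤ 1) (hy : ∀ i, y i ≠ 0)
    {s : ℝ} (hs : s ≠ 0) :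
    ∃ i, 0 < s * y i ∧ functionalMargin x y ŵ i = margin x y ŵ := by
  by_contra! hslack
  have hshift (i : ι) :
      ∀ᶠ ε : ℝ in 𝓝[>] 0, margin x y ŵ < functionalMargin x y (ŵ - ε • (0, s)) i := by
    rcases (mul_ne_zero hs (hy i)).lt_or_gt with hneg | hpos
    · filter_upwards [self_mem_nhdsWithin] with ε hε
      have hgain : functionalMargin x y (ŵ - ε • (0, s)) i
          = functionalMargin x y ŵ i - ε * (s * y i) := by
        simp only [functionalMargin, Prod.fst_sub, Prod.snd_sub, Prod.smul_mk, smul_zero, sub_zero,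
          smul_eq_mul]
        ring
      linarith [margin_le_functionalMargin (x := x) (y := y) ŵ i,
        mul_neg_of_pos_of_neg (mem_Ioi.1 hε) hneg]
    · have hcont : Continuous fun ε : ℝ => functionalMargin x y (ŵ - ε • (0, s)) i :=
        (continuous_functionalMargin i).comp (by fun_prop)
      have hlt := (margin_le_functionalMargin ŵ i).lt_of_ne (hslack i hpos).symm
      exact nhdsWithin_le_nhds (hcont.continuousAt.eventually (lt_mem_nhds (by simpa using hlt)))
  obtain ⟨ε, hε⟩ := (eventually_all.2 hshift).exists
  exact (lt_margin_iff.2 hε).not_ge (hmax (by simpa using hŵ))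

theorem tendsto_fst_of_tendsto_margin (hŵ : ‖ŵ.1‖ ≤ 1) (hK : 0 < margin x y ŵ)
    {α : Type*} {l : Filter α} {u : α → E × ℝ} (hu : ∀ᶠ a in l, ‖(u a).1‖ ≤ 1)
    (hlim : Tendsto (fun a => margin x y (u a)) l (𝓝 (margin x y ŵ))) :
    Tendsto (fun a => (u a).1) l (𝓝 ŵ.1) := by
  have hbound : Tendsto (fun a => 4 - (margin x y (u a) / margin x y ŵ + 1) ^ 2) l (𝓝 0) := by
    convert (((hlim.div_const (margin x y ŵ)).add_const 1).pow 2).const_sub 4 using 2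
    rw [div_self hK.ne']
    norm_num
  have hsq : Tendsto (fun a => ‖(u a).1 - ŵ.1‖ ^ 2) l (𝓝 0) := by
    refine squeeze_zero' (.of_forall fun a => by positivity) ?_ hbound
    filter_upwards [hu, hlim.eventually (lt_mem_nhds hK)] with a hnorm hpos
    exact norm_fst_sub_sq_le_of_isMaxOn hmax hŵ hK hnorm hpos
  rw [tendsto_iff_norm_sub_tendsto_zero]
  simpa [Real.sqrt_sq] using hsq.sqrt

theorem tendsto_of_tendsto_margin (hŵ : ‖ŵ.1‖ ≤ 1) (hK : 0 < margin x y ŵ)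
    {α : Type*} {l : Filter α} {u : α → E × ℝ} (hu : ∀ᶠ a in l, ‖(u a).1‖ ≤ 1)
    (hlim : Tendsto (fun a => margin x y (u a)) l (𝓝 (margin x y ŵ))) :
    Tendsto u l (𝓝 ŵ) := by
  have hfst := tendsto_fst_of_tendsto_margin hmax hŵ hK hu hlim
  have hy (i : ι) : y i ≠ 0 := fun hi => (lt_margin_iff.1 hK i).ne' (by simp [functionalMargin, hi])
  have hconstraint {i : ι} (hi : functionalMargin x y ŵ i = margin x y ŵ) :
      Tendsto (fun a => margin x y (u a) / y i - ⟪x i, (u a).1⟫) l (𝓝 ŵ.2) := by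
    rw [snd_eq_functionalMargin_div_sub_inner (x := x) (hy i) ŵ, hi]
    exact (hlim.div_const _).sub (tendsto_const_nhds.inner hfst)
  obtain ⟨i, hi, hi_tight⟩ := exists_functionalMargin_eq_margin_of_isMaxOn hmax hŵ hy one_ne_zero
  obtain ⟨j, hj, hj_tight⟩ :=
    exists_functionalMargin_eq_margin_of_isMaxOn hmax hŵ hy (neg_ne_zero.2 one_ne_zero)
  refine hfst.prodMk_nhds <|
    tendsto_of_tendsto_of_tendsto_of_le_of_le (hconstraint hi_tight) (hconstraint hj_tight)
      (fun a => ?_) (fun a => ?_)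
  · change _ ≤ (u a).2
    rw [snd_eq_functionalMargin_div_sub_inner (x := x) (hy i) (u a)]
    have hi_pos : 0 < y i := by linarith
    gcongr
    exact margin_le_functionalMargin _ i
  · change (u a).2 ≤ _
    rw [snd_eq_functionalMargin_div_sub_inner (x := x) (hy j) (u a)]
    exact sub_le_sub_right
      (div_le_div_of_nonpos_of_le (by linarith) (margin_le_functionalMargin _ j)) _

end MaxMargin

end Margin

section Risk

open Set Topology

variable {ι E : Type*} [Fintype ι] [NormedAddCommGroup E] [InnerProductSpace ℝ E]
  {x : ι → E} {y : ι → ℝ} {ℓ : ℝ → ℝ} {lam : ℝ}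

/-- The empirical risk of the affine classifier `p` for the margin loss `ℓ`. -/
noncomputable def empiricalRisk (ℓ : ℝ → ℝ) (x : ι → E) (y : ι → ℝ) (p : E × ℝ) : ℝ :=
  (Fintype.card ι : ℝ)⁻¹ * ∑ i, ℓ (functionalMargin x y p i)

/-- The empirical risk with a ridge penalty on `β` only: the intercept is not penalized. -/
noncomputable def ridgeRisk (ℓ : ℝ → ℝ) (x : ι → E) (y : ι → ℝ) (lam : ℝ) (p : E × ℝ) : ℝ :=
  empiricalRisk ℓ x y p + lam * ‖p.1‖ ^ 2

theorem empiricalRisk_nonneg (hnonneg : ∀ t, 0 ≤ ℓ t) (p : E × ℝ) : 0 ≤ empiricalRisk ℓ x y p :=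
  mul_nonneg (by positivity) (Finset.sum_nonneg fun _ _ => hnonneg _)

theorem loss_functionalMargin_le_card_mul_empiricalRisk (hnonneg : ∀ t, 0 ≤ ℓ t) (p : E × ℝ)
    (i : ι) : ℓ (functionalMargin x y p i) ≤ Fintype.card ι * empiricalRisk ℓ x y p := by
  have : Nonempty ι := ⟨i⟩
  have hcard : (Fintype.card ι : ℝ) ≠ 0 := Nat.cast_ne_zero.2 Fintype.card_ne_zero
  rw [empiricalRisk, mul_inv_cancel_left₀ hcard]
  exact Finset.single_le_sum (f := fun j => ℓ (functionalMargin x y p j))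
    (fun _ _ => hnonneg _) (Finset.mem_univ i)

section Existence

theorem lowerSemicontinuous_ridgeRisk (hlsc : LowerSemicontinuous ℓ) :
    LowerSemicontinuous (ridgeRisk ℓ x y lam) := by
  have hsum : LowerSemicontinuous fun p : E × ℝ => ∑ i, ℓ (functionalMargin x y p i) :=
    lowerSemicontinuous_sum fun i _ => hlsc.comp (continuous_functionalMargin i)
  refine LowerSemicontinuous.add ?_ (Continuous.lowerSemicontinuous (by fun_prop))
  exact (continuous_const_mul _).comp_lowerSemicontinuous hsum
    (monotone_mul_left_of_nonneg (by positivity))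

theorem isBounded_setOf_ridgeRisk_le (hnonneg : ∀ t, 0 ≤ ℓ t) (hbot : Tendsto ℓ atBot atTop)
    (hplus : ∃ i, 0 < y i) (hminus : ∃ i, y i < 0) (hlam : 0 < lam) (c : ℝ) :
    Bornology.IsBounded {p : E × ℝ | ridgeRisk ℓ x y lam p ≤ c} := by
  obtain ⟨B, hB⟩ := eventually_atBot.1 (hbot.eventually_gt_atTop (Fintype.card ι * c))
  refine (isBounded_setOf_le_functionalMargin (x := x) hplus hminus √(c / lam) B).subset
    fun p (hp : ridgeRisk ℓ x y lam p ≤ c) => ?_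
  rw [ridgeRisk] at hp
  constructor
  · refine Real.le_sqrt_of_sq_le ((le_div_iff₀' hlam).2 ?_)
    linarith [empiricalRisk_nonneg (x := x) (y := y) hnonneg p]
  · intro i
    have hloss : ℓ (functionalMargin x y p i) ≤ Fintype.card ι * c := by
      refine (loss_functionalMargin_le_card_mul_empiricalRisk hnonneg p i).trans ?_
      gcongr
      linarith [show 0 ≤ lam * ‖p.1‖ ^ 2 by positivity]
    exact (not_le.1 fun hle => (hB _ hle).not_ge hloss).le

theorem exists_isMinOn_ridgeRisk [FiniteDimensional ℝ E] (hlsc : LowerSemicontinuous ℓ)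
    (hnonneg : ∀ t, 0 ≤ ℓ t) (hbot : Tendsto ℓ atBot atTop)
    (hplus : ∃ i, 0 < y i) (hminus : ∃ i, y i < 0) (hlam : 0 < lam) :
    ∃ p, IsMinOn (ridgeRisk ℓ x y lam) univ p := by
  have : ProperSpace E := FiniteDimensional.proper ℝ E
  have hR : LowerSemicontinuous (ridgeRisk ℓ x y lam) := lowerSemicontinuous_ridgeRisk hlsc
  let S := {p | ridgeRisk ℓ x y lam p ≤ ridgeRisk ℓ x y lam 0}
  have hS : IsCompact S := Metric.isCompact_of_isClosed_isBounded (hR.isClosed_preimage _)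
    (isBounded_setOf_ridgeRisk_le hnonneg hbot hplus hminus hlam _)
  have hzero : (0 : E × ℝ) ∈ S := le_refl (ridgeRisk ℓ x y lam 0)
  obtain ⟨p, hpS, hp⟩ := (hR.lowerSemicontinuousOn S).exists_isMinOn ⟨0, hzero⟩ hS
  refine ⟨p, fun q _ => ?_⟩
  rcases le_total (ridgeRisk ℓ x y lam q) (ridgeRisk ℓ x y lam 0) with hq | hq
  · exact hp hq
  · exact le_trans hpS hq

end Existence

section Asymptotics

variable [Nonempty ι]

theorem empiricalRisk_le_loss_margin (hanti : Antitone ℓ) (p : E × ℝ) :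
    empiricalRisk ℓ x y p ≤ ℓ (margin x y p) := by
  rw [empiricalRisk, inv_mul_le_iff₀ (by positivity), ← nsmul_eq_mul]
  exact Finset.sum_le_card_nsmul _ _ _ fun i _ => hanti (margin_le_functionalMargin p i)

theorem loss_margin_le_card_mul_empiricalRisk (hnonneg : ∀ t, 0 ≤ ℓ t) (p : E × ℝ) :
    ℓ (margin x y p) ≤ Fintype.card ι * empiricalRisk ℓ x y p := by
  obtain ⟨i, hi⟩ := exists_margin_eq_functionalMargin x y p
  exact hi ▸ loss_functionalMargin_le_card_mul_empiricalRisk hnonneg p i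

theorem loss_margin_le_of_isMinOn_ridgeRisk (hanti : Antitone ℓ) (hnonneg : ∀ t, 0 ≤ ℓ t)
    {w : E × ℝ} (hw : IsMinOn (ridgeRisk ℓ x y lam) univ w) (p : E × ℝ) :
    ℓ (margin x y w) ≤
      Fintype.card ι * (ℓ (margin x y p) + lam * (‖p.1‖ ^ 2 - ‖w.1‖ ^ 2)) := by
  refine (loss_margin_le_card_mul_empiricalRisk hnonneg w).trans ?_
  gcongr
  have hmin : empiricalRisk ℓ x y w + lam * ‖w.1‖ ^ 2 ≤
      empiricalRisk ℓ x y p + lam * ‖p.1‖ ^ 2 := hw (mem_univ p)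
  linarith [empiricalRisk_le_loss_margin (x := x) (y := y) hanti p]

variable {w : ℝ → E × ℝ} (hanti : Antitone ℓ) (hpos : ∀ t, 0 < ℓ t)
  (hw : ∀ᶠ lam in 𝓝[>] 0, IsMinOn (ridgeRisk ℓ x y lam) univ (w lam))

include hanti hpos hw

theorem tendsto_margin_atTop_of_isMinOn_ridgeRisk (hzero : Tendsto ℓ atTop (𝓝 0))
    (hsep : ∃ p, 0 < margin x y p) :
    Tendsto (fun lam => margin x y (w lam)) (𝓝[>] 0) atTop := by
  obtain ⟨p, hp⟩ := hsep
  refine tendsto_atTop.2 fun C => ?_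
  obtain ⟨t, ht_nonneg, ht⟩ : ∃ t, 0 ≤ t ∧ Fintype.card ι * ℓ (t * margin x y p) < ℓ C := by
    have hlim := (hzero.comp (tendsto_id.atTop_mul_const hp)).const_mul (Fintype.card ι : ℝ)
    rw [mul_zero] at hlim
    exact ((eventually_ge_atTop 0).and (hlim.eventually (gt_mem_nhds (hpos C)))).exists
  rw [← margin_smul ht_nonneg] at ht
  have hbound : ∀ᶠ lam in 𝓝[>] (0 : ℝ),
      Fintype.card ι * (ℓ (margin x y (t • p)) + lam * ‖(t • p).1‖ ^ 2) < ℓ C :=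
    (Continuous.tendsto' (by fun_prop) 0 _ (by simp)).mono_left nhdsWithin_le_nhds
      |>.eventually (gt_mem_nhds ht)
  filter_upwards [hw, hbound, self_mem_nhdsWithin] with lam hmin hlt hlam
  refine (hanti.reflect_lt (lt_of_le_of_lt ?_ hlt)).le
  refine (loss_margin_le_of_isMinOn_ridgeRisk hanti (fun t => (hpos t).le) hmin (t • p)).trans ?_
  have hlam : 0 < lam := hlam
  gcongr
  exact sub_le_self _ (by positivity)

variable {ŵ : E × ℝ} (hrapid : RapidlyVarying ℓ)
  (hmax : IsMaxOn (margin x y) {p | ‖p.1‖ ≤ 1} ŵ)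

include hrapid hmax

theorem tendsto_norm_mul_margin_atTop_of_isMinOn_ridgeRisk (hsep : ∃ p, 0 < margin x y p) :
    Tendsto (fun lam => ‖(w lam).1‖ * margin x y ŵ) (𝓝[>] 0) atTop :=
  tendsto_atTop_mono (fun lam => margin_le_norm_mul_margin hmax (w lam))
    (tendsto_margin_atTop_of_isMinOn_ridgeRisk hanti hpos hw (hrapid.tendsto_zero hanti hpos) hsep)

theorem eventually_mul_lt_margin_of_isMinOn_ridgeRisk (hŵ : ‖ŵ.1‖ ≤ 1)
    (hsep : ∃ p, 0 < margin x y p) {ε : ℝ} (hε : ε ∈ Ioo (0 : ℝ) 1) :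
    ∀ᶠ lam in 𝓝[>] 0, ε * (‖(w lam).1‖ * margin x y ŵ) < margin x y (w lam) := by
  have hscale := tendsto_norm_mul_margin_atTop_of_isMinOn_ridgeRisk hanti hpos hw hrapid hmax hsep
  filter_upwards [hw, self_mem_nhdsWithin, hscale.eventually
    (hrapid.eventually_mul_lt_of_le hanti hpos (Fintype.card ι) hε)] with lam hmin hlam hlt
  refine hlt _ ((loss_margin_le_of_isMinOn_ridgeRisk hanti (fun t => (hpos t).le) hmin
    (‖(w lam).1‖ • ŵ)).trans ?_)
  rw [margin_smul (norm_nonneg _)]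
  have hnorm : ‖(‖(w lam).1‖ • ŵ).1‖ ≤ ‖(w lam).1‖ := by
    rw [Prod.smul_fst, norm_smul, norm_norm]
    exact mul_le_of_le_one_right (norm_nonneg _) hŵ
  gcongr
  refine add_le_of_nonpos_right (mul_nonpos_of_nonneg_of_nonpos (le_of_lt hlam) ?_)
  exact sub_nonpos.2 (pow_le_pow_left₀ (norm_nonneg _) hnorm 2)

theorem tendsto_margin_inv_norm_smul_of_isMinOn_ridgeRisk (hŵ : ‖ŵ.1‖ ≤ 1)
    (hsep : ∃ p, 0 < margin x y p) :
    Tendsto (fun lam => margin x y (‖(w lam).1‖⁻¹ • w lam)) (𝓝[>] 0) (𝓝 (margin x y ŵ)) := by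
  have hK := margin_pos_of_isMaxOn hmax hsep
  have hnorm := tendsto_norm_mul_margin_atTop_of_isMinOn_ridgeRisk hanti hpos hw hrapid hmax hsep
    |>.eventually_gt_atTop 0 |>.mono fun _ h => pos_of_mul_pos_left h hK.le
  refine tendsto_order.2 ⟨fun a ha => ?_, fun a ha => ?_⟩
  · obtain ⟨ε, hε_lower, hε_lt⟩ := exists_between (max_lt one_pos ((div_lt_one hK).2 ha))
    obtain ⟨hε_pos, hε⟩ := max_lt_iff.1 hε_lower
    filter_upwards [hnorm, eventually_mul_lt_margin_of_isMinOn_ridgeRisk hanti hpos hw hrapid hmax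
      hŵ hsep ⟨hε_pos, hε_lt⟩] with lam hlam_norm hlt
    rw [margin_smul (by positivity), lt_inv_mul_iff₀ hlam_norm]
    calc ‖(w lam).1‖ * a < ‖(w lam).1‖ * (ε * margin x y ŵ) := by
          gcongr
          exact (div_lt_iff₀ hK).1 hε
      _ = ε * (‖(w lam).1‖ * margin x y ŵ) := by ring
      _ < margin x y (w lam) := hlt
  · filter_upwards [hnorm] with lam hlam_norm
    rw [margin_smul (by positivity)]
    refine lt_of_le_of_lt ?_ ha
    exact (inv_mul_le_iff₀ hlam_norm).2 (margin_le_norm_mul_margin hmax (w lam))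

end Asymptotics

end Risk

open scoped Topology in
theorem stmt_3_general {ι E : Type*} [Fintype ι] [Nonempty ι] [NormedAddCommGroup E]
    [InnerProductSpace ℝ E] {x : ι → E} {y : ι → ℝ} {ℓ : ℝ → ℝ}
    (hanti : Antitone ℓ) (hpos : ∀ t, 0 < ℓ t) (hrapid : RapidlyVarying ℓ)
    (hsep : ∃ p, 0 < margin x y p) {ŵ : E × ℝ} (hŵ : ‖ŵ.1‖ ≤ 1)
    (hmax : IsMaxOn (margin x y) {p | ‖p.1‖ ≤ 1} ŵ) {w : ℝ → E × ℝ}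
    (hw : ∀ᶠ lam in 𝓝[>] 0, IsMinOn (ridgeRisk ℓ x y lam) Set.univ (w lam)) :
    (∀ᶠ lam in 𝓝[>] 0, (w lam).1 ≠ 0) ∧
    Tendsto (fun lam => ‖(w lam).1‖⁻¹ • w lam) (𝓝[>] 0) (𝓝 ŵ) := by
  have hzero := hrapid.tendsto_zero hanti hpos
  have hne : ∀ᶠ lam in 𝓝[>] 0, (w lam).1 ≠ 0 :=
    (tendsto_margin_atTop_of_isMinOn_ridgeRisk hanti hpos hw hzero hsep).eventually_gt_atTop 0
      |>.mono fun _ => fst_ne_zero_of_margin_pos hmax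
  refine ⟨hne, tendsto_of_tendsto_margin hmax hŵ (margin_pos_of_isMaxOn hmax hsep) ?_ <|
    tendsto_margin_inv_norm_smul_of_isMinOn_ridgeRisk hanti hpos hw hrapid hmax hŵ hsep⟩
  exact hne.mono fun lam hlam => (norm_smul_inv_norm (𝕜 := ℝ) hlam).le

/-- Ridge-regularized empirical risk minimizers with a rapidly
varying loss converge in direction to the max-margin solution as the
regularization parameter tends to `0⁺`. -/
theorem stmt_3
    (n d : ℕ) (hn : 1 ≤ n) (hd : 1 ≤ d)
    (x : Fin n → EuclideanSpace ℝ (Fin d))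
    (y : Fin n → ℝ) (hy : ∀ i, y i = 1 ∨ y i = -1)
    (hplus : ∃ i, y i = 1) (hminus : ∃ i, y i = -1)
    (hsep : ∃ (β : EuclideanSpace ℝ (Fin d)) (β₀ : ℝ),
      ∀ i, 0 < y i * (⟪x i, β⟫ + β₀))
    (M : EuclideanSpace ℝ (Fin d) → ℝ → ℝ)
    (hM : ∀ β β₀, M β β₀ =
      (Finset.univ : Finset (Fin n)).inf' ⟨hplus.choose, Finset.mem_univ hplus.choose⟩
        fun i => y i * (⟪x i, β⟫ + β₀))
    (βhat : EuclideanSpace ℝ (Fin d)) (βhat₀ : ℝ)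
    (hnorm : ‖βhat‖ ≤ 1)
    (hopt : ∀ q : EuclideanSpace ℝ (Fin d) × ℝ, ‖q.1‖ ≤ 1 → M q.1 q.2 ≤ M βhat βhat₀)
    (ℓ : ℝ → ℝ)
    (hconv : ConvexOn ℝ Set.univ ℓ)
    (hanti : Antitone ℓ)
    (hnonconst : ∃ s t : ℝ, ℓ s ≠ ℓ t)
    (hpos : ∀ t, 0 < ℓ t)
    (hrapid : ∀ ε : ℝ, ε ∈ Set.Ioo (0 : ℝ) 1 →
      Tendsto (fun t => ℓ (ε * t) / ℓ t) atTop atTop)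
    (R : ℝ → EuclideanSpace ℝ (Fin d) → ℝ → ℝ)
    (hR : ∀ lam β β₀, R lam β β₀ =
      (n : ℝ)⁻¹ * ∑ i, ℓ (y i * (⟪x i, β⟫ + β₀)) + lam * ‖β‖ ^ 2)
    (βlam : ℝ → EuclideanSpace ℝ (Fin d)) (β₀lam : ℝ → ℝ)
    (hminim : ∀ lam, 0 < lam → ∀ q : EuclideanSpace ℝ (Fin d) × ℝ,
      R lam (βlam lam) (β₀lam lam) ≤ R lam q.1 q.2) :
    (∀ lam : ℝ, 0 < lam → ∃ p : EuclideanSpace ℝ (Fin d) × ℝ,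
      ∀ q : EuclideanSpace ℝ (Fin d) × ℝ, R lam p.1 p.2 ≤ R lam q.1 q.2) ∧
    (∀ᶠ lam in nhdsWithin (0 : ℝ) (Set.Ioi 0), βlam lam ≠ 0) ∧
    Tendsto (fun lam => (‖βlam lam‖)⁻¹ • βlam lam)
      (nhdsWithin (0 : ℝ) (Set.Ioi 0)) (nhds βhat) ∧
    Tendsto (fun lam => β₀lam lam / ‖βlam lam‖)
      (nhdsWithin (0 : ℝ) (Set.Ioi 0)) (nhds βhat₀) := by
  have : Nonempty (Fin n) := ⟨hplus.choose⟩
  obtain rfl : M = fun β β₀ => margin x y (β, β₀) := by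
    funext β β₀
    exact hM β β₀
  obtain rfl : R = fun lam β β₀ => ridgeRisk ℓ x y lam (β, β₀) := by
    funext lam β β₀
    rw [hR, ridgeRisk, empiricalRisk, Fintype.card_fin]
    rfl
  have hlsc : LowerSemicontinuous ℓ :=
    (continuousOn_univ.1 (hconv.continuousOn isOpen_univ)).lowerSemicontinuous
  have hbot := tendsto_atBot_atTop_of_convexOn_of_antitone hconv hanti hnonconst
  have hpos_label : ∃ i, 0 < y i := hplus.imp fun i hi => by simp [hi]
  have hneg_label : ∃ i, y i < 0 := hminus.imp fun i hi => by simp [hi]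
  obtain ⟨β, β₀, hβ⟩ := hsep
  obtain ⟨hne, hlim⟩ := stmt_3_general hanti hpos hrapid ⟨(β, β₀), lt_margin_iff.2 hβ⟩
    (ŵ := (βhat, βhat₀)) hnorm hopt (w := fun lam => (βlam lam, β₀lam lam))
    (eventually_nhdsWithin_of_forall fun lam hlam q _ => hminim lam hlam q)
  refine ⟨fun lam hlam => ?_, hne, hlim.fst_nhds, ?_⟩
  · obtain ⟨p, hp⟩ := exists_isMinOn_ridgeRisk (x := x) hlsc (fun t => (hpos t).le) hbot
      hpos_label hneg_label hlam
    exact ⟨p, fun q => hp (Set.mem_univ q)⟩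
  · simpa only [div_eq_inv_mul, Prod.smul_snd, smul_eq_mul] using hlim.snd_nhds
end

section
/- Let (Ω, F, P) be a probability space, V : Ω → ℝ measurable, a ∈ ℝ with a ≠ 0, and ℓ : ℝ → ℝ nonnegative and strictly convex (hence continuous). If ξ₁, ξ₂ : Ω → ℝ are measurable with P(ξ₁ ≠ ξ₂) > 0, E[ℓ(V + a·ξ₁)] < ∞, and E[ℓ(V + a·ξ₂)] < ∞, then for every α ∈ (0,1): E[ℓ(V + a·(α·ξ₁ + (1−α)·ξ₂))] < α·E[ℓ(V + a·ξ₁)] + (1−α)·E[ℓ(V + a·ξ₂)]. In particular, the functional ξ ↦ E[ℓ(V + a·ξ)] is strictly convex on L²(P) (up to almost-sure equality). -/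
open MeasureTheory

/-!
For every `ω` the integrand `x ↦ ℓ (V ω + a • x)` is strictly convex, because `x ↦ V ω + a • x` is
an injective affine map. Hence the convexity inequality at `ξ₁ ω`, `ξ₂ ω` holds almost everywhere,
and equality of the integrals of its two sides would force equality of the sides almost everywhere,
that is, `ξ₁ = ξ₂` almost everywhere. The left-hand side is integrable, being squeezed between `0`
and the integrable right-hand side.
-/

section IntegralFunctional

variable {Ω E : Type*} [MeasurableSpace Ω] {μ : Measure Ω} [AddCommMonoid E] [Module ℝ E]
  {s : Set E} {f : Ω → E → ℝ} {X Y : Ω → E} {a b : ℝ}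

theorem ae_map_convexCombination_le (hf : ∀ᵐ ω ∂μ, ConvexOn ℝ s (f ω))
    (hX : ∀ᵐ ω ∂μ, X ω ∈ s) (hY : ∀ᵐ ω ∂μ, Y ω ∈ s) (ha : 0 ≤ a) (hb : 0 ≤ b) (hab : a + b = 1) :
    ∀ᵐ ω ∂μ, f ω (a • X ω + b • Y ω) ≤ a * f ω (X ω) + b * f ω (Y ω) := by
  filter_upwards [hf, hX, hY] with ω hfω hXω hYω
  exact hfω.2 hXω hYω ha hb hab

theorem integrable_map_convexCombination (hf : ∀ᵐ ω ∂μ, ConvexOn ℝ s (f ω))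
    (hX : ∀ᵐ ω ∂μ, X ω ∈ s) (hY : ∀ᵐ ω ∂μ, Y ω ∈ s)
    (hfX : Integrable (fun ω => f ω (X ω)) μ) (hfY : Integrable (fun ω => f ω (Y ω)) μ)
    (ha : 0 ≤ a) (hb : 0 ≤ b) (hab : a + b = 1)
    (hmeas : AEStronglyMeasurable (fun ω => f ω (a • X ω + b • Y ω)) μ)
    {h : Ω → ℝ} (hint : Integrable h μ) (hle : ∀ᵐ ω ∂μ, h ω ≤ f ω (a • X ω + b • Y ω)) :
    Integrable (fun ω => f ω (a • X ω + b • Y ω)) μ :=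
  integrable_of_le_of_le hmeas hle (ae_map_convexCombination_le hf hX hY ha hb hab) hint
    ((hfX.const_mul a).add (hfY.const_mul b))

theorem integral_map_convexCombination_lt (hf : ∀ᵐ ω ∂μ, StrictConvexOn ℝ s (f ω))
    (hX : ∀ᵐ ω ∂μ, X ω ∈ s) (hY : ∀ᵐ ω ∂μ, Y ω ∈ s) (hXY : ¬ X =ᵐ[μ] Y)
    (hfX : Integrable (fun ω => f ω (X ω)) μ) (hfY : Integrable (fun ω => f ω (Y ω)) μ)
    (hfXY : Integrable (fun ω => f ω (a • X ω + b • Y ω)) μ)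
    (ha : 0 < a) (hb : 0 < b) (hab : a + b = 1) :
    ∫ ω, f ω (a • X ω + b • Y ω) ∂μ < a * ∫ ω, f ω (X ω) ∂μ + b * ∫ ω, f ω (Y ω) ∂μ := by
  have hle := ae_map_convexCombination_le (hf.mono fun _ h => h.convexOn) hX hY ha.le hb.le hab
  have hrhs : Integrable (fun ω => a * f ω (X ω) + b * f ω (Y ω)) μ :=
    (hfX.const_mul a).add (hfY.const_mul b)
  rw [← integral_const_mul, ← integral_const_mul,
    ← integral_add (hfX.const_mul a) (hfY.const_mul b)]
  refine (integral_mono_ae hfXY hrhs hle).lt_of_ne fun heq => hXY ?_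
  filter_upwards [(integral_eq_iff_of_ae_le hfXY hrhs hle).1 heq, hf, hX, hY]
    with ω hω hfω hXω hYω
  by_contra hne
  exact (hfω.2 hXω hYω hne ha hb hab).ne hω

end IntegralFunctional

theorem strictConvexOn_comp_linearMap {𝕜 E F β : Type*} [Semiring 𝕜] [PartialOrder 𝕜]
    [AddCommMonoid E] [Module 𝕜 E] [AddCommMonoid F] [Module 𝕜 F]
    [AddCommMonoid β] [PartialOrder β] [SMul 𝕜 β] {s : Set F} {f : F → β}
    (hf : StrictConvexOn 𝕜 s f) {A : E →ₗ[𝕜] F} (hA : Function.Injective A) :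
    StrictConvexOn 𝕜 (A ⁻¹' s) (f ∘ A) := by
  refine ⟨hf.1.linear_preimage A, fun x hx y hy hxy a b ha hb hab => ?_⟩
  simpa only [Function.comp_apply, map_add, map_smul] using hf.2 hx hy (hA.ne hxy) ha hb hab

theorem stmt_6_general {Ω E : Type*} [MeasurableSpace Ω] {μ : Measure Ω}
    [NormedAddCommGroup E] [NormedSpace ℝ E] [FiniteDimensional ℝ E]
    {V ξ₁ ξ₂ : Ω → E} (hV : AEStronglyMeasurable V μ)
    (h₁ : AEStronglyMeasurable ξ₁ μ) (h₂ : AEStronglyMeasurable ξ₂ μ)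
    {a : ℝ} (ha : a ≠ 0)
    {ℓ : E → ℝ} (hnonneg : ∀ x, 0 ≤ ℓ x) (hconv : StrictConvexOn ℝ Set.univ ℓ)
    (hne : ¬ ξ₁ =ᵐ[μ] ξ₂)
    (hint₁ : Integrable (fun ω => ℓ (V ω + a • ξ₁ ω)) μ)
    (hint₂ : Integrable (fun ω => ℓ (V ω + a • ξ₂ ω)) μ)
    {α : ℝ} (hα : α ∈ Set.Ioo (0 : ℝ) 1) :
    ∫ ω, ℓ (V ω + a • (α • ξ₁ ω + (1 - α) • ξ₂ ω)) ∂μ <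
      α * ∫ ω, ℓ (V ω + a • ξ₁ ω) ∂μ + (1 - α) * ∫ ω, ℓ (V ω + a • ξ₂ ω) ∂μ := by
  have hα' : 0 < 1 - α := sub_pos.2 hα.2
  have hsum : α + (1 - α) = 1 := add_sub_cancel α 1
  have hcont : Continuous ℓ :=
    continuousOn_univ.1 (hconv.convexOn.continuousOn isOpen_univ)
  have hmeas : AEStronglyMeasurable (fun ω => ℓ (V ω + a • (α • ξ₁ ω + (1 - α) • ξ₂ ω))) μ :=
    hcont.comp_aestronglyMeasurable
      (hV.add (((h₁.const_smul α).add (h₂.const_smul (1 - α))).const_smul a))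
  have hf : ∀ᵐ ω ∂μ, StrictConvexOn ℝ Set.univ fun x => ℓ (V ω + a • x) :=
    .of_forall fun ω => strictConvexOn_comp_linearMap (hconv.translate_right (V ω))
      (LinearEquiv.smulOfNeZero ℝ E a ha).injective
  have hmem (ξ : Ω → E) : ∀ᵐ ω ∂μ, ξ ω ∈ Set.univ := .of_forall fun _ => Set.mem_univ _
  have hint := integrable_map_convexCombination (hf.mono fun _ h => h.convexOn) (hmem ξ₁) (hmem ξ₂)
    hint₁ hint₂ hα.1.le hα'.le hsum hmeas (integrable_zero Ω ℝ μ) (.of_forall fun _ => hnonneg _)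
  exact integral_map_convexCombination_lt hf (hmem ξ₁) (hmem ξ₂) hne hint₁ hint₂ hint
    hα.1 hα' hsum

/-- Strict convexity of the risk functional `ξ ↦ E[ℓ(V + a·ξ)]`
for a strictly convex nonnegative loss. -/
theorem stmt_6 {Ω : Type*} [MeasurableSpace Ω] (P : Measure Ω) [IsProbabilityMeasure P]
    (V : Ω → ℝ) (hV : Measurable V)
    (a : ℝ) (ha : a ≠ 0)
    (ℓ : ℝ → ℝ) (hnonneg : ∀ t, 0 ≤ ℓ t) (hconv : StrictConvexOn ℝ Set.univ ℓ)
    (ξ₁ ξ₂ : Ω → ℝ) (h₁ : Measurable ξ₁) (h₂ : Measurable ξ₂)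
    (hne : 0 < P {ω | ξ₁ ω ≠ ξ₂ ω})
    (hint₁ : Integrable (fun ω => ℓ (V ω + a * ξ₁ ω)) P)
    (hint₂ : Integrable (fun ω => ℓ (V ω + a * ξ₂ ω)) P)
    (α : ℝ) (hα : α ∈ Set.Ioo (0 : ℝ) 1) :
    (∫ ω, ℓ (V ω + a * (α * ξ₁ ω + (1 - α) * ξ₂ ω)) ∂P) <
      α * (∫ ω, ℓ (V ω + a * ξ₁ ω) ∂P) + (1 - α) * (∫ ω, ℓ (V ω + a * ξ₂ ω) ∂P) := by
  exact stmt_6_general hV.aestronglyMeasurable h₁.aestronglyMeasurable h₂.aestronglyMeasurable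
    ha hnonneg hconv hne.ne' hint₁ hint₂ hα
end

section
/- For every x ∈ ℝ: Φ(x)² > φ(x)·(x·Φ(x) + φ(x)). Equivalently, Φ(x)²/φ(x) > E[(Z + x)₊] for Z standard normal, where a₊ := max(a, 0). -/
open MeasureTheory

/-- The standard normal density. -/
noncomputable def normPDF (x : ℝ) : ℝ := Real.exp (-x ^ 2 / 2) / Real.sqrt (2 * Real.pi)

/-- The standard normal cumulative distribution function. -/
noncomputable def normCDF (x : ℝ) : ℝ := ∫ t in Set.Iic x, normPDF t

/-!
The inequality says that a normal law truncated to `(-∞, x]` has positive variance. Integration by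
parts gives its unnormalized moments: for the standard normal law, the mass is `Φ(x)`, the first
moment is `-φ(x)` and the second is `Φ(x) - x φ(x)`. The strict Cauchy–Schwarz inequality
`φ(x)² < Φ(x) (Φ(x) - x φ(x))` is the claim.
-/

open ProbabilityTheory Set
open scoped ENNReal NNReal

section StrictCauchySchwarz

variable {Ω : Type*} {mΩ : MeasurableSpace Ω} {μ : Measure Ω}

lemma not_ae_eq_const_of_injective [NullSingletonClass μ] [NeZero μ] {β : Type*} {f : Ω → β}
    (hf : f.Injective) (c : β) : ¬ f =ᵐ[μ] fun _ ↦ c := by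
  intro h
  obtain ⟨a, ha⟩ := h.exists
  obtain ⟨b, hb, hba⟩ := (h.and (μ.ae_ne a)).exists
  exact hba (hf (hb.trans ha.symm))

lemma integral_sub_const_sq [IsFiniteMeasure μ] {X : Ω → ℝ} (hX : MemLp X 2 μ) (c : ℝ) :
    ∫ ω, (X ω - c) ^ 2 ∂μ =
      (∫ ω, X ω ^ 2 ∂μ) - 2 * c * (∫ ω, X ω ∂μ) + c ^ 2 * μ.real univ := by
  have hlin : Integrable (fun ω ↦ 2 * c * X ω) μ := (hX.integrable one_le_two).const_mul (2 * c)
  have hdiff : Integrable (fun ω ↦ X ω ^ 2 - 2 * c * X ω) μ := hX.integrable_sq.sub hlin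
  simp only [sub_sq, mul_right_comm _ _ c]
  rw [integral_add hdiff (integrable_const _), integral_sub hX.integrable_sq hlin,
    integral_const_mul, integral_const, smul_eq_mul, mul_comm (μ.real univ)]

lemma integral_sub_const_sq_pos [IsFiniteMeasure μ] {X : Ω → ℝ} (hX : MemLp X 2 μ) {c : ℝ}
    (hc : ¬ X =ᵐ[μ] fun _ ↦ c) : 0 < ∫ ω, (X ω - c) ^ 2 ∂μ := by
  have hdev : MemLp (fun ω ↦ X ω - c) 2 μ := hX.sub (memLp_const c)
  refine (integral_nonneg fun ω ↦ sq_nonneg _).lt_of_ne' fun hzero ↦ hc ?_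
  filter_upwards [(integral_eq_zero_iff_of_nonneg (fun ω ↦ sq_nonneg _) hdev.integrable_sq).1
    hzero] with ω hω
  exact sub_eq_zero.1 (sq_eq_zero_iff.1 hω)

lemma sq_integral_lt_measureReal_univ_mul_integral_sq [IsFiniteMeasure μ] {X : Ω → ℝ}
    (hX : MemLp X 2 μ) (hconst : ∀ c, ¬ X =ᵐ[μ] fun _ ↦ c) :
    (∫ ω, X ω ∂μ) ^ 2 < μ.real univ * ∫ ω, X ω ^ 2 ∂μ := by
  have : NeZero μ := ⟨by rintro rfl; exact hconst 0 (by simp [Filter.EventuallyEq])⟩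
  have hmass : 0 < μ.real univ := measureReal_univ_pos
  have hpos := integral_sub_const_sq_pos hX (hconst ((∫ ω, X ω ∂μ) / μ.real univ))
  rw [integral_sub_const_sq hX] at hpos
  have hscale : μ.real univ * ((∫ ω, X ω ^ 2 ∂μ)
        - 2 * ((∫ ω, X ω ∂μ) / μ.real univ) * (∫ ω, X ω ∂μ)
        + ((∫ ω, X ω ∂μ) / μ.real univ) ^ 2 * μ.real univ) =
      μ.real univ * (∫ ω, X ω ^ 2 ∂μ) - (∫ ω, X ω ∂μ) ^ 2 := by
    field_simp
    ring
  exact sub_pos.1 (hscale ▸ mul_pos hmass hpos)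

end StrictCauchySchwarz

section TruncatedGaussian

variable {E : Type*} [NormedAddCommGroup E] [NormedSpace ℝ E] {m : ℝ} {v : ℝ≥0}

lemma hasDerivAt_gaussianPDFReal (m : ℝ) (v : ℝ≥0) (x : ℝ) :
    HasDerivAt (gaussianPDFReal m v) (-(x - m) / v * gaussianPDFReal m v x) x := by
  have hexponent : HasDerivAt (fun t ↦ -(t - m) ^ 2 / (2 * v)) (-(x - m) / v) x := by
    refine ((((hasDerivAt_id x).sub_const m).pow 2).neg.div_const (2 * v : ℝ)).congr_deriv ?_
    simp only [id]
    ring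
  refine (hexponent.exp.const_mul _).congr_deriv ?_
  rw [gaussianPDFReal]
  ring

lemma integrableOn_gaussianReal_iff (hv : v ≠ 0) {s : Set ℝ} (hs : MeasurableSet s) {f : ℝ → E} :
    IntegrableOn f s (gaussianReal m v) ↔ IntegrableOn (fun t ↦ gaussianPDFReal m v t • f t) s := by
  rw [IntegrableOn, gaussianReal_of_var_ne_zero m hv, restrict_withDensity hs,
    integrable_withDensity_iff_integrable_smul' (measurable_gaussianPDF m v)
      (ae_of_all _ fun _ ↦ gaussianPDF_lt_top)]
  simp only [toReal_gaussianPDF, IntegrableOn]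

lemma setIntegral_gaussianReal (hv : v ≠ 0) {s : Set ℝ} (hs : MeasurableSet s) (f : ℝ → E) :
    ∫ t in s, f t ∂gaussianReal m v = ∫ t in s, gaussianPDFReal m v t • f t := by
  rw [gaussianReal_of_var_ne_zero m hv, setIntegral_withDensity_eq_setIntegral_toReal_smul
    (measurable_gaussianPDF m v) (ae_of_all _ fun _ ↦ gaussianPDF_lt_top) f hs]
  simp only [toReal_gaussianPDF]

lemma cdf_gaussianReal (hv : v ≠ 0) (x : ℝ) :
    cdf (gaussianReal m v) x = ∫ t in Iic x, gaussianPDFReal m v t := by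
  have hmass := setIntegral_gaussianReal (m := m) hv (measurableSet_Iic (a := x)) (fun _ ↦ (1 : ℝ))
  simpa [cdf_eq_real] using hmass

lemma setIntegral_Iic_gaussianReal_stein [CompleteSpace E] (hv : v ≠ 0) {f f' : ℝ → E} {x : ℝ}
    (hderiv : ∀ t ∈ Iic x, HasDerivAt f (f' t) t)
    (hf : IntegrableOn f (Iic x) (gaussianReal m v))
    (hstein : IntegrableOn (fun t ↦ (v : ℝ) • f' t - (t - m) • f t) (Iic x) (gaussianReal m v)) :
    ∫ t in Iic x, ((v : ℝ) • f' t - (t - m) • f t) ∂gaussianReal m v =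
      (v : ℝ) • gaussianPDFReal m v x • f x := by
  have hprod : ∀ t ∈ Iic x, HasDerivAt (fun t ↦ (v : ℝ) • gaussianPDFReal m v t • f t)
      (gaussianPDFReal m v t • ((v : ℝ) • f' t - (t - m) • f t)) t := fun t ht ↦ by
    refine (((hasDerivAt_gaussianPDFReal m v t).smul (hderiv t ht)).const_smul
      (v : ℝ)).congr_deriv ?_
    match_scalars <;> field_simp
  rw [integrableOn_gaussianReal_iff hv measurableSet_Iic] at hf hstein
  have hlim := tendsto_zero_of_hasDerivAt_of_integrableOn_Iic hprod hstein (hf.smul (v : ℝ))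
  rw [setIntegral_gaussianReal hv measurableSet_Iic,
    integral_Iic_of_hasDerivAt_of_tendsto' hprod hstein hlim, sub_zero]

lemma memLp_sub_const_gaussianReal (m : ℝ) (v : ℝ≥0) (c : ℝ) {p : ℝ≥0∞} (hp : p ≠ ∞) :
    MemLp (fun t ↦ t - c) p (gaussianReal m v) :=
  (memLp_id_gaussianReal' p hp).sub (memLp_const c)

lemma setIntegral_Iic_sub_mean_gaussianReal (hv : v ≠ 0) (x : ℝ) :
    ∫ t in Iic x, (t - m) ∂gaussianReal m v = -(v * gaussianPDFReal m v x) := by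
  have hint : Integrable (fun t ↦ t - m) (gaussianReal m v) :=
    memLp_one_iff_integrable.1 (memLp_sub_const_gaussianReal m v m ENNReal.one_ne_top)
  have hstein := setIntegral_Iic_gaussianReal_stein (m := m) hv (x := x)
    (f := fun _ ↦ (1 : ℝ)) (f' := fun _ ↦ 0)
    (fun t _ ↦ hasDerivAt_const t 1) (integrable_const 1).integrableOn
    (by simp only [smul_eq_mul, mul_zero, mul_one, zero_sub]; exact hint.neg.integrableOn)
  simp only [smul_eq_mul, mul_zero, mul_one, zero_sub, integral_neg] at hstein
  linarith

lemma setIntegral_Iic_sub_mean_sq_gaussianReal (hv : v ≠ 0) (x : ℝ) :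
    ∫ t in Iic x, (t - m) ^ 2 ∂gaussianReal m v =
      v * (cdf (gaussianReal m v) x - (x - m) * gaussianPDFReal m v x) := by
  have hmem : MemLp (fun t ↦ t - m) 2 (gaussianReal m v) :=
    memLp_sub_const_gaussianReal m v m ENNReal.ofNat_ne_top
  have hsq := hmem.integrable_sq.integrableOn (s := Iic x)
  have hconst : IntegrableOn (fun _ ↦ (v : ℝ)) (Iic x) (gaussianReal m v) := integrableOn_const
  have hstein := setIntegral_Iic_gaussianReal_stein hv (f := fun t ↦ t - m) (f' := fun _ ↦ 1)
    (fun t _ ↦ (hasDerivAt_id t).sub_const m) (hmem.integrable one_le_two).integrableOn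
    (by simp only [smul_eq_mul, mul_one, ← sq]; exact hconst.sub hsq)
  simp only [smul_eq_mul, mul_one, ← sq] at hstein
  rw [integral_sub hconst hsq, setIntegral_const, smul_eq_mul, ← cdf_eq_real] at hstein
  linarith

end TruncatedGaussian

theorem stmt_8_general (m : ℝ) {v : ℝ≥0} (hv : v ≠ 0) (x : ℝ) :
    gaussianPDFReal m v x *
        ((x - m) * cdf (gaussianReal m v) x + v * gaussianPDFReal m v x) <
      cdf (gaussianReal m v) x ^ 2 := by
  have hv_pos : (0 : ℝ) < v := NNReal.coe_pos.2 (pos_iff_ne_zero.2 hv)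
  have : NullSingletonClass (gaussianReal m v) := nullSingletonClass_gaussianReal hv
  have : NeZero ((gaussianReal m v).restrict (Iic x)) := ⟨by
    rw [Ne, Measure.restrict_eq_zero]
    exact fun hnull ↦ by simpa using gaussianReal_absolutelyContinuous' m hv hnull⟩
  have hcs := sq_integral_lt_measureReal_univ_mul_integral_sq
    ((memLp_sub_const_gaussianReal m v m ENNReal.ofNat_ne_top).restrict (Iic x))
    (not_ae_eq_const_of_injective sub_left_injective)
  rw [measureReal_restrict_apply_univ, ← cdf_eq_real, setIntegral_Iic_sub_mean_gaussianReal hv,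
    setIntegral_Iic_sub_mean_sq_gaussianReal hv] at hcs
  refine lt_of_mul_lt_mul_left ?_ hv_pos.le
  linarith

lemma normPDF_eq_gaussianPDFReal : normPDF = gaussianPDFReal 0 1 := by
  ext x
  simp [normPDF, gaussianPDFReal, div_eq_inv_mul]

lemma normCDF_eq_cdf_gaussianReal : normCDF = cdf (gaussianReal 0 1) := by
  ext x
  rw [cdf_gaussianReal one_ne_zero, normCDF, normPDF_eq_gaussianPDFReal]

/-- For every real `x`, `Φ(x)² > φ(x)·(x·Φ(x) + φ(x))`. -/
theorem stmt_8 (x : ℝ) :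
    normPDF x * (x * normCDF x + normPDF x) < normCDF x ^ 2 := by
  simpa [normPDF_eq_gaussianPDFReal, normCDF_eq_cdf_gaussianReal] using
    stmt_8_general 0 one_ne_zero x
end

section
/- The function x ↦ g₁(x)/Φ(x) = (x·Φ(x) + φ(x))/Φ(x) is strictly increasing on ℝ. Equivalently, since g₁′ = Φ, the map x ↦ x·(g₁⁻¹)′(x) is strictly increasing on (0, ∞). -/
open MeasureTheory

/-- `g₁(x) = x·Φ(x) + φ(x)`, equal to `E[(Z+x)₊]` for standard normal `Z`. -/
noncomputable def g1 (x : ℝ) : ℝ := x * normCDF x + normPDF x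

/-- `g₂(x) = (x²+1)·Φ(x) + x·φ(x)`, equal to `E[(Z+x)₊²]` for standard normal `Z`. -/
noncomputable def g2 (x : ℝ) : ℝ := (x ^ 2 + 1) * normCDF x + x * normPDF x

/-- The inverse of `g₁` (on its range `(0,∞)`). -/
noncomputable def g1inv : ℝ → ℝ := Function.invFun g1

/-- `g = g₂ ∘ g₁⁻¹`. -/
noncomputable def gfn (t : ℝ) : ℝ := g2 (g1inv t)

open Filter Set Topology

/-!
For a standard normal `Z`, the ratio `g₁(x)/Φ(x)` is the conditional mean `E[x - Z | Z ≤ x]`, and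
its derivative `1 - φ(x) g₁(x)/Φ(x)²` is the conditional variance `Var[Z | Z ≤ x]`. Integration by
parts gives the truncated moments `Φ`, `-φ` and `Φ - xφ` of orders `0`, `1` and `2`, so positivity
of the derivative is the strict Cauchy–Schwarz inequality `φ² < Φ (Φ - xφ)`. The claim on `g₁⁻¹`
is the substitution `y = g₁(x)`, since `(g₁⁻¹)′(g₁(x)) = 1/Φ(x)`.
-/

section Integral

lemma integral_pos_of_ae_pos {α : Type*} [MeasurableSpace α] {μ : Measure α} [NeZero μ]
    {f : α → ℝ} (hf : Integrable f μ) (hpos : ∀ᵐ t ∂μ, 0 < f t) : 0 < ∫ t, f t ∂μ := by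
  have hnonneg : 0 ≤ᵐ[μ] f := hpos.mono fun _ ht => ht.le
  refine (integral_nonneg_of_ae hnonneg).lt_of_ne' fun hzero => ?_
  have hf_zero : f =ᵐ[μ] 0 := (integral_eq_zero_iff_of_nonneg_ae hnonneg hf).1 hzero
  obtain ⟨t, ht_pos, ht_zero⟩ := (hpos.and hf_zero).exists
  exact ht_pos.ne' ht_zero

lemma sq_integral_mul_lt_integral_mul_integral_sq_mul {α : Type*} [MeasurableSpace α]
    {μ : Measure α} {f w : α → ℝ}
    (hw : ∀ᵐ t ∂μ, 0 < w t) (hf : ∀ c : ℝ, ¬ f =ᵐ[μ] fun _ => c)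
    (hw_int : Integrable w μ) (hfw_int : Integrable (fun t => f t * w t) μ)
    (hf2w_int : Integrable (fun t => f t ^ 2 * w t) μ) :
    (∫ t, f t * w t ∂μ) ^ 2 < (∫ t, w t ∂μ) * ∫ t, f t ^ 2 * w t ∂μ := by
  have : NeZero μ := ⟨fun hμ => hf 0 (by simp [hμ, EventuallyEq])⟩
  set W := ∫ t, w t ∂μ
  set M := ∫ t, f t * w t ∂μ
  set S := ∫ t, f t ^ 2 * w t ∂μ
  have hW : 0 < W := integral_pos_of_ae_pos hw_int hw
  -- At the weighted mean `c`, the integral of `(f - c)² w` is the weighted variance `S - M²/W`.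
  let c := M / W
  have hcW : c * W = M := div_mul_cancel₀ M hW.ne'
  have hexpand : (fun t => (f t - c) ^ 2 * w t) =
      fun t => f t ^ 2 * w t - 2 * c * (f t * w t) + c ^ 2 * w t := by
    ext t; ring
  have hsub_int : Integrable (fun t => f t ^ 2 * w t - 2 * c * (f t * w t)) μ :=
    hf2w_int.sub (hfw_int.const_mul _)
  have hint : Integrable (fun t => (f t - c) ^ 2 * w t) μ := by
    rw [hexpand]
    exact hsub_int.add (hw_int.const_mul _)
  have hvalue : ∫ t, (f t - c) ^ 2 * w t ∂μ = S - 2 * c * M + c ^ 2 * W := by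
    rw [hexpand, integral_add hsub_int (hw_int.const_mul _),
      integral_sub hf2w_int (hfw_int.const_mul _), integral_const_mul, integral_const_mul]
  have hnonneg : 0 ≤ᵐ[μ] fun t => (f t - c) ^ 2 * w t :=
    hw.mono fun t ht => mul_nonneg (sq_nonneg _) ht.le
  have hpos : 0 < ∫ t, (f t - c) ^ 2 * w t ∂μ := by
    refine (integral_nonneg_of_ae hnonneg).lt_of_ne' fun hzero => hf c ?_
    filter_upwards [hw, (integral_eq_zero_iff_of_nonneg_ae hnonneg hint).1 hzero] with t ht ht_zero
    simpa [ht.ne', sub_eq_zero] using ht_zero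
  have hvariance : W * (S - 2 * c * M + c ^ 2 * W) = W * S - M ^ 2 := by
    rw [← hcW]; ring
  rw [← sub_pos, ← hvariance, ← hvalue]
  exact mul_pos hW hpos

variable {E : Type*} [NormedAddCommGroup E] [NormedSpace ℝ E] [CompleteSpace E]

lemma hasDerivAt_integral_Iic {f : ℝ → E} {x : ℝ} (hf : Integrable f) (hx : ContinuousAt f x) :
    HasDerivAt (fun y => ∫ t in Iic y, f t) (f x) x := by
  have hsplit : (fun y => ∫ t in Iic y, f t) =
      fun y => (∫ t in Iic x, f t) + ∫ t in x..y, f t := by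
    ext y
    rw [← intervalIntegral.integral_Iic_sub_Iic hf.integrableOn hf.integrableOn,
      add_sub_cancel]
  rw [hsplit]
  exact (intervalIntegral.integral_hasDerivAt_right IntervalIntegrable.refl
    hf.aestronglyMeasurable.stronglyMeasurableAtFilter hx).const_add _

lemma integral_Iic_of_hasDerivAt_of_integrableOn {f f' : ℝ → E} {a : ℝ}
    (hderiv : ∀ x ∈ Iic a, HasDerivAt f (f' x) x) (hf' : IntegrableOn f' (Iic a))
    (hf : IntegrableOn f (Iic a)) : ∫ x in Iic a, f' x = f a := by
  simpa using integral_Iic_of_hasDerivAt_of_tendsto' hderiv hf'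
    (tendsto_zero_of_hasDerivAt_of_integrableOn_Iic hderiv hf' hf)

end Integral

section InverseFunction

lemma hasStrictDerivAt_invFun {𝕜 : Type*} [NontriviallyNormedField 𝕜] [CompleteSpace 𝕜]
    {f : 𝕜 → 𝕜} {f' x : 𝕜} (hf : HasStrictDerivAt f f' x) (hf' : f' ≠ 0)
    (hinj : Function.Injective f) : HasStrictDerivAt (Function.invFun f) f'⁻¹ (f x) :=
  hf.to_local_left_inverse hf' (.of_forall (Function.leftInverse_invFun hinj))

lemma strictMonoOn_mul_deriv_invFun_iff {f f' : ℝ → ℝ}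
    (hf : ∀ x, HasStrictDerivAt f (f' x) x) (hpos : ∀ x, 0 < f' x) :
    StrictMonoOn (fun y => y * deriv (Function.invFun f) y) (range f) ↔
      StrictMono fun x => f x / f' x := by
  have hmono : StrictMono f := strictMono_of_hasDerivAt_pos (fun x => (hf x).hasDerivAt) hpos
  have hderiv (x : ℝ) : deriv (Function.invFun f) (f x) = (f' x)⁻¹ :=
    (hasStrictDerivAt_invFun (hf x) (hpos x).ne' hmono.injective).hasDerivAt.deriv
  simp only [StrictMonoOn, forall_mem_range, hmono.lt_iff_lt, hderiv, ← div_eq_mul_inv, StrictMono]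

end InverseFunction

lemma normPDF_pos (x : ℝ) : 0 < normPDF x := by
  unfold normPDF; positivity

lemma hasDerivAt_normPDF (x : ℝ) : HasDerivAt normPDF (-(x * normPDF x)) x := by
  have hexponent : HasDerivAt (fun t : ℝ => -t ^ 2 / 2) (-x) x :=
    ((hasDerivAt_pow 2 x).neg.div_const 2).congr_deriv (by push_cast; ring)
  exact (hexponent.exp.div_const _).congr_deriv (by unfold normPDF; ring)

lemma continuous_normPDF : Continuous normPDF :=
  continuous_iff_continuousAt.2 fun x => (hasDerivAt_normPDF x).continuousAt

lemma integrable_pow_mul_normPDF (n : ℕ) : Integrable fun t => t ^ n * normPDF t := by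
  have hexp : Integrable fun t : ℝ => t ^ (n : ℝ) * Real.exp (-(1 / 2) * t ^ 2) :=
    integrable_rpow_mul_exp_neg_mul_sq (by norm_num) (neg_one_lt_zero.trans_le n.cast_nonneg)
  refine (hexp.div_const (Real.sqrt (2 * Real.pi))).congr (.of_forall fun t => ?_)
  simp only [normPDF, Real.rpow_natCast, mul_div_assoc]
  ring_nf

lemma integrable_normPDF : Integrable normPDF := by
  simpa using integrable_pow_mul_normPDF 0

lemma integrable_mul_normPDF : Integrable fun t => t * normPDF t := by
  simpa using integrable_pow_mul_normPDF 1

lemma tendsto_normPDF_atBot : Tendsto normPDF atBot (𝓝 0) :=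
  tendsto_zero_of_hasDerivAt_of_integrableOn_Iic (a := 0) (fun x _ => hasDerivAt_normPDF x)
    integrable_mul_normPDF.neg.integrableOn integrable_normPDF.integrableOn

lemma integral_Iic_mul_normPDF (x : ℝ) : ∫ t in Iic x, t * normPDF t = -normPDF x :=
  integral_Iic_of_hasDerivAt_of_integrableOn
    (fun t _ => (hasDerivAt_normPDF t).neg.congr_deriv (neg_neg _))
    integrable_mul_normPDF.integrableOn integrable_normPDF.neg.integrableOn

lemma integral_Iic_sq_mul_normPDF (x : ℝ) :
    ∫ t in Iic x, t ^ 2 * normPDF t = normCDF x - x * normPDF x := by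
  have hderiv (t : ℝ) :
      HasDerivAt (fun t => t * normPDF t) (normPDF t - t ^ 2 * normPDF t) t :=
    ((hasDerivAt_id t).mul (hasDerivAt_normPDF t)).congr_deriv (by rw [id]; ring)
  have hparts : ∫ t in Iic x, (normPDF t - t ^ 2 * normPDF t) = x * normPDF x :=
    integral_Iic_of_hasDerivAt_of_integrableOn (fun t _ => hderiv t)
      (integrable_normPDF.sub (integrable_pow_mul_normPDF 2)).integrableOn
      integrable_mul_normPDF.integrableOn
  rw [integral_sub integrable_normPDF.integrableOn
    (integrable_pow_mul_normPDF 2).integrableOn] at hparts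
  rw [normCDF, ← hparts, sub_sub_cancel]

lemma hasDerivAt_normCDF (x : ℝ) : HasDerivAt normCDF (normPDF x) x :=
  hasDerivAt_integral_Iic integrable_normPDF continuous_normPDF.continuousAt

lemma continuous_normCDF : Continuous normCDF :=
  continuous_iff_continuousAt.2 fun x => (hasDerivAt_normCDF x).continuousAt

lemma strictMono_normCDF : StrictMono normCDF :=
  strictMono_of_hasDerivAt_pos hasDerivAt_normCDF normPDF_pos

instance neZero_volume_restrict_Iic (x : ℝ) : NeZero (volume.restrict (Iic x)) :=
  ⟨by simp [Measure.restrict_eq_zero]⟩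

lemma normCDF_pos (x : ℝ) : 0 < normCDF x :=
  integral_pos_of_ae_pos integrable_normPDF.integrableOn (.of_forall normPDF_pos)

lemma normPDF_mul_g1_lt_sq_normCDF (x : ℝ) : normPDF x * g1 x < normCDF x ^ 2 := by
  have hcauchy : (-normPDF x) ^ 2 < normCDF x * (normCDF x - x * normPDF x) := by
    rw [← integral_Iic_mul_normPDF, ← integral_Iic_sq_mul_normPDF]
    refine sq_integral_mul_lt_integral_mul_integral_sq_mul (.of_forall normPDF_pos) (fun c hc => ?_)
      integrable_normPDF.integrableOn integrable_mul_normPDF.integrableOn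
      (integrable_pow_mul_normPDF 2).integrableOn
    obtain ⟨t, ht, ht'⟩ := (hc.and (Measure.ae_ne _ c)).exists
    exact ht' ht
  unfold g1
  linarith

lemma hasDerivAt_g1 (x : ℝ) : HasDerivAt g1 (normCDF x) x :=
  (((hasDerivAt_id x).mul (hasDerivAt_normCDF x)).add (hasDerivAt_normPDF x)).congr_deriv
    (by simp)

lemma hasStrictDerivAt_g1 (x : ℝ) : HasStrictDerivAt g1 (normCDF x) x :=
  hasStrictDerivAt_of_hasDerivAt_of_continuousAt (.of_forall hasDerivAt_g1)
    continuous_normCDF.continuousAt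

lemma continuous_g1 : Continuous g1 :=
  continuous_iff_continuousAt.2 fun x => (hasDerivAt_g1 x).continuousAt

lemma integral_Iic_sub_mul_normPDF (x : ℝ) : ∫ t in Iic x, (x - t) * normPDF t = g1 x := by
  simp only [sub_mul]
  rw [integral_sub (integrable_normPDF.const_mul x).integrableOn
    integrable_mul_normPDF.integrableOn, integral_const_mul, integral_Iic_mul_normPDF,
    sub_neg_eq_add, g1, normCDF]

lemma g1_pos (x : ℝ) : 0 < g1 x := by
  rw [← integral_Iic_sub_mul_normPDF]
  refine integral_pos_of_ae_pos ?_ ?_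
  · simp only [sub_mul]
    exact ((integrable_normPDF.const_mul x).sub integrable_mul_normPDF).integrableOn
  · filter_upwards [ae_restrict_mem measurableSet_Iic, Measure.ae_ne _ x] with t ht htx
    exact mul_pos (sub_pos.2 (lt_of_le_of_ne ht htx)) (normPDF_pos t)

lemma tendsto_g1_atBot : Tendsto g1 atBot (𝓝 0) := by
  refine squeeze_zero' (.of_forall fun x => (g1_pos x).le) ?_ tendsto_normPDF_atBot
  filter_upwards [eventually_le_atBot 0] with x hx
  exact add_le_of_nonpos_left (mul_nonpos_of_nonpos_of_nonneg hx (normCDF_pos x).le)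

lemma tendsto_g1_atTop : Tendsto g1 atTop atTop := by
  refine tendsto_atTop_mono' _ ?_ (tendsto_id.atTop_mul_const (normCDF_pos 0))
  filter_upwards [eventually_ge_atTop 0] with x hx
  calc x * normCDF 0 ≤ x * normCDF x :=
        mul_le_mul_of_nonneg_left (strictMono_normCDF.monotone hx) hx
    _ ≤ g1 x := le_add_of_nonneg_right (normPDF_pos x).le

lemma range_g1 : range g1 = Ioi 0 := by
  refine (range_subset_iff.2 g1_pos).antisymm ?_
  rw [← image_univ]
  exact isPreconnected_univ.intermediate_value_Ioi (by simp) (by simp)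
    continuous_g1.continuousOn tendsto_g1_atBot tendsto_g1_atTop

lemma strictMono_g1_div_normCDF : StrictMono fun x => g1 x / normCDF x := by
  refine strictMono_of_hasDerivAt_pos
    (fun x => (hasDerivAt_g1 x).div (hasDerivAt_normCDF x) (normCDF_pos x).ne') fun x => ?_
  have hnum : 0 < normCDF x * normCDF x - g1 x * normPDF x := by
    linarith [normPDF_mul_g1_lt_sq_normCDF x]
  exact div_pos hnum (pow_pos (normCDF_pos x) 2)

/-- `x ↦ g₁(x)/Φ(x)` is strictly increasing on `ℝ`;
equivalently, since `g₁′ = Φ`, the map `x ↦ x·(g₁⁻¹)′(x)` is strictly increasing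
on `(0,∞)`. -/
theorem stmt_10 :
    (StrictMono fun x => g1 x / normCDF x) ∧
    (∀ x : ℝ, deriv g1 x = normCDF x) ∧
    StrictMonoOn (fun x => x * deriv g1inv x) (Set.Ioi 0) := by
  refine ⟨strictMono_g1_div_normCDF, fun x => (hasDerivAt_g1 x).deriv, ?_⟩
  rw [← range_g1]
  exact (strictMonoOn_mul_deriv_invFun_iff hasStrictDerivAt_g1 normCDF_pos).2
    strictMono_g1_div_normCDF
end
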